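/- Let X_ℕ = {x_{n1}, x_{n2} : n ∈ ℕ} be a countably infinite set of pairwise distinct points in ℝ², and let {V_n : n ∈ ℕ} be a family of pairwise disjoint countable sets in ℝ² − X_ℕ, each dense in ℝ². Suppose (1) q(x_{n1}) → +∞ and q(x_{n2}) → −∞ as n → ∞, and (2) for every β ∈ p(X_ℕ) there exists δ_β > 0 such that X_ℕ ∩ p⁻¹([β − δ_β, β + δ_β]) is a finite set. Then there exists a homeomorphism F : ℝ² → ℝ² such that for every n ∈ ℕ and every v ∈ V_n one has ω_F(v) = {x_{n1}} and α_F(v) = {x_{n2}}. -/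

import Mathlib

/-! The plane is identified with `ℂ`. The points of `⋃ n, V n` are enumerated as `e 0, e 1, …`, and
the homeomorphism is a uniform limit of area preserving homeomorphisms `F k` of bounded support,
starting from the identity. At stage `k` there is a closed countable `F k`-invariant set `S k`,
containing the prescribed limit points (all fixed) and the full orbits of `e 0, …, e (k - 1)`, but
no other point of the enumeration. All later perturbations leave the map unchanged on `S k`, so
these orbits survive in the limit; as consecutive maps and their inverses are `2⁻ᵏ`-close, the limit
is a homeomorphism (`exists_limit`).

The inductive step (`Stage.step`, from `exists_orbit`) brings in the orbit of one more point `v`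
which must go to a fixed point `x1` in the future and come from a fixed point `x2` in the past. It
combines two kinds of small perturbations.

* Landing (`exists_landing`): near the fixed point `x1` points are pushed, simultaneously in
  a sequence of shrinking annuli, so that some sequence converging to `x1` becomes an orbit.
  The same is done for the inverse at `x2`.
* Connecting (`exists_connection`): any two points `u ≠ w` are joined by a finite orbit segment
  after a small perturbation. Since `F` preserves area and has bounded support, there is no
  proper absorbing open set (`eq_univ_of_absorbing`), so `u` and `w` are joined by a pseudo-orbit
  with arbitrarily small jumps (`exists_chain`). All its jumps are then closed at once by a
  homeomorphism close to the identity (`exists_small_push`), which moves finitely many points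
  inside the tiles of four mutually shifted tilings of the plane.

Preserving area is what makes the argument work: it persists along the construction because the
basic pushes (`exists_push`) are compositions of twists, rotations by an angle which depends only on
the distance to a centre.
Pushes avoid the closed countable set to be kept fixed because a connected open subset of the plane
stays connected after removing a countable set (`isPreconnected_diff`).

The hypotheses that the second coordinates of the prescribed limit points tend to `±∞` enter only
through the consequence that these points form a closed set.
-/

/-- The ω-limit set of a point `x` under a map `f`. -/
def omegaLimitSet {X : Type*} [TopologicalSpace X] (f : X → X) (x : X) : Set X :=
  {y | ∃ φ : ℕ → ℕ, StrictMono φ ∧ (∀ i, 0 < φ i) ∧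
    Filter.Tendsto (fun i => f^[φ i] x) Filter.atTop (nhds y)}

namespace Wada

open Set Filter Topology Metric MeasureTheory

/-! ### Area preserving homeomorphisms and their limits -/

/-- `F` preserves the area of open sets. -/
def MP (F : ℂ ≃ₜ ℂ) : Prop := ∀ U : Set ℂ, IsOpen U → volume (F ⁻¹' U) = volume U

/-- `F` is the identity outside some disc. -/
def BS (F : ℂ ≃ₜ ℂ) : Prop := ∃ R : ℝ, ∀ z : ℂ, R ≤ ‖z‖ → F z = z

/-- The admissible homeomorphisms: area preserving and boundedly supported. -/
def Adm (F : ℂ ≃ₜ ℂ) : Prop := MP F ∧ BS F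

/-- `F` and `G` are uniformly `ε`-close, and so are their inverses. -/
def Near (ε : ℝ) (F G : ℂ ≃ₜ ℂ) : Prop :=
  ∀ z, dist (F z) (G z) ≤ ε ∧ dist (F.symm z) (G.symm z) ≤ ε

theorem MP.symm {F : ℂ ≃ₜ ℂ} (h : MP F) : MP F.symm := by
  intro U hU
  have := h (F '' U) (F.isOpenMap U hU)
  rw [preimage_image_eq _ F.injective] at this
  rw [this, ← F.image_eq_preimage_symm]

theorem MP.trans {F G : ℂ ≃ₜ ℂ} (hF : MP F) (hG : MP G) : MP (F.trans G) := by
  intro U hU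
  change volume (F ⁻¹' (G ⁻¹' U)) = volume U
  rw [hF _ (hU.preimage G.continuous), hG U hU]

theorem MP.refl : MP (Homeomorph.refl ℂ) := fun U _ => by simp

theorem fix_symm {F : ℂ ≃ₜ ℂ} {z : ℂ} (h : F z = z) : F.symm z = z := by
  rw [F.symm_apply_eq, h]

theorem Adm.refl : Adm (Homeomorph.refl ℂ) := ⟨MP.refl, 0, fun _ _ => rfl⟩

theorem Adm.symm {F : ℂ ≃ₜ ℂ} (h : Adm F) : Adm F.symm :=
  ⟨h.1.symm, h.2.imp fun _ hR z hz => fix_symm (hR z hz)⟩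

theorem Adm.trans {F G : ℂ ≃ₜ ℂ} (hF : Adm F) (hG : Adm G) : Adm (F.trans G) := by
  obtain ⟨R, hR⟩ := hF.2
  obtain ⟨R', hR'⟩ := hG.2
  refine ⟨hF.1.trans hG.1, max R R', fun z hz => ?_⟩
  rw [Homeomorph.trans_apply, hR z ((le_max_left _ _).trans hz),
    hR' z ((le_max_right _ _).trans hz)]

theorem Near.symm {ε : ℝ} {F G : ℂ ≃ₜ ℂ} (h : Near ε F G) : Near ε F.symm G.symm :=
  fun z => ⟨(h z).2, (h z).1⟩

theorem Near.trans {ε δ : ℝ} {F G H : ℂ ≃ₜ ℂ} (h : Near ε F G) (h' : Near δ G H) :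
    Near (ε + δ) F H := fun z =>
  ⟨(dist_triangle _ (G z) _).trans (add_le_add (h z).1 (h' z).1),
    (dist_triangle _ (G.symm z) _).trans (add_le_add (h z).2 (h' z).2)⟩

theorem Near.mono {ε δ : ℝ} {F G : ℂ ≃ₜ ℂ} (h : Near ε F G) (hle : ε ≤ δ) : Near δ F G :=
  fun z => ⟨(h z).1.trans hle, (h z).2.trans hle⟩

/-- Area preservation survives pointwise limits: by Fatou's lemma the limit does not increase the
area of preimages of open sets, and neither does its inverse. -/
theorem MP.of_tendsto {F : ℕ → ℂ ≃ₜ ℂ} {G : ℂ ≃ₜ ℂ} (hF : ∀ n, MP (F n))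
    (h : ∀ z, Tendsto (fun n => F n z) atTop (𝓝 (G z)))
    (h' : ∀ z, Tendsto (fun n => (F n).symm z) atTop (𝓝 (G.symm z))) : MP G := by
  have key : ∀ (F : ℕ → ℂ ≃ₜ ℂ) (G : ℂ ≃ₜ ℂ), (∀ n, MP (F n)) →
      (∀ z, Tendsto (fun n => F n z) atTop (𝓝 (G z))) → ∀ U, IsOpen U →
      volume (G ⁻¹' U) ≤ volume U := by
    intro F G hF h U hU
    have h1 : G ⁻¹' U ⊆ ⋃ N, ⋂ n ≥ N, F n ⁻¹' U := by
      intro z hz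
      obtain ⟨N, hN⟩ := eventually_atTop.1 ((h z).eventually (hU.mem_nhds hz))
      exact mem_iUnion.2 ⟨N, mem_iInter₂.2 fun n hn => hN n hn⟩
    refine (measure_mono h1).trans ?_
    rw [Monotone.measure_iUnion]
    · refine iSup_le fun N => ?_
      rw [← hF N U hU]
      exact measure_mono (iInter₂_subset N le_rfl)
    · intro N M hNM
      exact biInter_subset_biInter_left fun n hn => le_trans hNM hn
  intro U hU
  refine le_antisymm (key F G hF h U hU) ?_
  have := key (fun n => (F n).symm) G.symm (fun n => (hF n).symm) h' (G ⁻¹' U)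
    (hU.preimage G.continuous)
  rwa [← G.image_eq_preimage_symm, image_preimage_eq _ G.surjective] at this

/-- A sequence of homeomorphisms which is summably Cauchy, together with the inverses, for uniform
convergence has a homeomorphism as its limit. -/
theorem exists_limit {F : ℕ → ℂ ≃ₜ ℂ} {C : ℝ}
    (h : ∀ n, Near (C * (1 / 2) ^ n) (F (n + 1)) (F n)) :
    ∃ G : ℂ ≃ₜ ℂ, (∀ z, Tendsto (fun n => F n z) atTop (𝓝 (G z))) ∧
      ∀ z, Tendsto (fun n => (F n).symm z) atTop (𝓝 (G.symm z)) := by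
  have key : ∀ f : ℕ → ℂ → ℂ, (∀ n, Continuous (f n)) →
      (∀ n z, dist (f (n + 1) z) (f n z) ≤ C * (1 / 2) ^ n) →
      ∃ g : ℂ → ℂ, Continuous g ∧ TendstoUniformly f g atTop := by
    intro f hf hd
    have hd' : ∀ z n, dist (f n z) (f (n + 1) z) ≤ C * (1 / 2) ^ n := fun z n => by
      rw [dist_comm]; exact hd n z
    have hc : ∀ z, ∃ y, Tendsto (fun n => f n z) atTop (𝓝 y) := fun z =>
      cauchySeq_tendsto_of_complete (cauchySeq_of_le_geometric (1 / 2) C (by norm_num) (hd' z))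
    choose g hg using hc
    have hu : TendstoUniformly f g atTop := by
      rw [Metric.tendstoUniformly_iff]
      intro ε hε
      have h0 : Tendsto (fun n : ℕ => C * (1 / 2 : ℝ) ^ n / (1 - 1 / 2)) atTop (𝓝 0) := by
        have := ((tendsto_pow_atTop_nhds_zero_of_lt_one (r := (1 / 2 : ℝ)) (by norm_num)
          (by norm_num)).const_mul C).div_const (1 - 1 / 2)
        simpa using this
      filter_upwards [h0.eventually (gt_mem_nhds hε)] with n hn z
      rw [dist_comm]
      exact (dist_le_of_le_geometric_of_tendsto (1 / 2) C (by norm_num) (hd' z) (hg z) n).trans_lt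
        hn
    exact ⟨g, hu.continuous (Frequently.of_forall hf), hu⟩
  obtain ⟨g, hgc, hg⟩ := key (fun n => F n) (fun n => (F n).continuous) fun n z => (h n z).1
  obtain ⟨g', hgc', hg'⟩ := key (fun n => (F n).symm) (fun n => (F n).symm.continuous)
    fun n z => (h n z).2
  have comp : ∀ (f f' : ℕ → ℂ → ℂ) (g g' : ℂ → ℂ), Continuous g → TendstoUniformly f g atTop →
      TendstoUniformly f' g' atTop → (∀ n z, f n (f' n z) = z) → ∀ z, g (g' z) = z := by
    intro f f' g g' hg hf hf' hff z
    have h1 : Tendsto (fun n => f n (f' n z)) atTop (𝓝 (g (g' z))) :=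
      hf.tendsto_comp hg.continuousAt (hf'.tendsto_at z)
    simp only [hff] at h1
    exact tendsto_nhds_unique h1 tendsto_const_nhds
  refine ⟨{ toFun := g, invFun := g', left_inv := ?_, right_inv := ?_,
            continuous_toFun := hgc, continuous_invFun := hgc' },
    fun z => hg.tendsto_at z, fun z => hg'.tendsto_at z⟩
  · exact comp _ _ _ _ hgc' hg' hg fun n z => (F n).symm_apply_apply z
  · exact comp _ _ _ _ hgc hg hg' fun n z => (F n).apply_symm_apply z

/-! ### Local pushes -/

/-- The twist about `c` which rotates the circle of radius `r` about `c` by the angle `φ r`. -/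
noncomputable def twistFun (c : ℂ) (φ : ℝ → ℝ) (z : ℂ) : ℂ :=
  c + (z - c) * Complex.exp (φ ‖z - c‖ * Complex.I)

theorem twistFun_norm (c : ℂ) (φ : ℝ → ℝ) (z : ℂ) : ‖twistFun c φ z - c‖ = ‖z - c‖ := by
  simp [twistFun, Complex.norm_exp_ofReal_mul_I]

theorem twistFun_neg (c : ℂ) (φ : ℝ → ℝ) (z : ℂ) :
    twistFun c (fun r => - φ r) (twistFun c φ z) = z := by
  have h := twistFun_norm c φ z
  conv_lhs => rw [twistFun]
  rw [h, twistFun, add_sub_cancel_left, mul_assoc, ← Complex.exp_add]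
  simp

/-- The twist as a homeomorphism. -/
noncomputable def twist (c : ℂ) (φ : ℝ → ℝ) (hφ : Continuous φ) : ℂ ≃ₜ ℂ where
  toFun := twistFun c φ
  invFun := twistFun c fun r => - φ r
  left_inv := twistFun_neg c φ
  right_inv z := by
    have := twistFun_neg c (fun r => - φ r) z
    simpa using this
  continuous_toFun := by unfold twistFun; fun_prop
  continuous_invFun := by unfold twistFun; fun_prop

/-- In polar coordinates a twist translates the angle by an amount depending on the radius only. -/
theorem twist_mp (c : ℂ) (φ : ℝ → ℝ) (hφ : Continuous φ) : MP (twist c φ hφ) := by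
  intro U hU
  -- translate the centre to the origin
  set W : Set ℂ := (fun z => c + z) ⁻¹' U with hW
  have hWo : IsOpen W := hU.preimage (by fun_prop)
  have h1 : volume W = volume U := measure_preimage_add volume c U
  have h2 : volume ((fun z => c + z) ⁻¹' (twist c φ hφ ⁻¹' U)) = volume (twist c φ hφ ⁻¹' U) :=
    measure_preimage_add volume c _
  have h3 : (fun z => c + z) ⁻¹' (twist c φ hφ ⁻¹' U) = twistFun 0 φ ⁻¹' W := by
    ext z; simp [twist, twistFun, hW]
  rw [← h1, ← h2, h3]
  have hc : Continuous (twistFun 0 φ) := by unfold twistFun; fun_prop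
  rw [← lintegral_indicator_one (hWo.preimage hc).measurableSet,
    ← lintegral_indicator_one hWo.measurableSet, ← Complex.lintegral_comp_polarCoord_symm,
    ← Complex.lintegral_comp_polarCoord_symm (W.indicator 1)]
  have hm : ∀ (V : Set ℂ), IsOpen V → Measurable fun p : ℝ × ℝ =>
      ENNReal.ofReal p.1 • V.indicator (1 : ℂ → ENNReal) (Complex.polarCoord.symm p) := by
    intro V hV
    refine (ENNReal.measurable_ofReal.comp measurable_fst).smul
      ((measurable_one.indicator hV.measurableSet).comp ?_)
    have : (Complex.polarCoord.symm : ℝ × ℝ → ℂ) = fun p : ℝ × ℝ =>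
      (p.1 : ℂ) * (Real.cos p.2 + Real.sin p.2 * Complex.I) := by
      ext p; exact Complex.polarCoord_symm_apply p
    rw [this]
    have : Continuous fun p : ℝ × ℝ =>
      (p.1 : ℂ) * (Real.cos p.2 + Real.sin p.2 * Complex.I) := by fun_prop
    exact this.measurable
  have ht : Complex.polarCoord.target = Ioi (0 : ℝ) ×ˢ Ioo (-Real.pi) Real.pi := rfl
  change ∫⁻ p in Ioi (0 : ℝ) ×ˢ Ioo (-Real.pi) Real.pi, _ =
    ∫⁻ p in Ioi (0 : ℝ) ×ˢ Ioo (-Real.pi) Real.pi, _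
  rw [Measure.volume_eq_prod, setLIntegral_prod _ (hm _ (hWo.preimage hc)).aemeasurable,
    setLIntegral_prod _ (hm _ hWo).aemeasurable]
  refine setLIntegral_congr_fun measurableSet_Ioi fun r hr => ?_
  have hr : 0 < r := hr
  dsimp only
  set h : ℝ → ENNReal := fun θ =>
    ENNReal.ofReal r • W.indicator (1 : ℂ → ENNReal) (Complex.polarCoord.symm (r, θ)) with hh
  have hper : Function.Periodic h (2 * Real.pi) := by
    intro θ
    simp only [hh, Complex.polarCoord_symm_apply, Real.cos_add_two_pi, Real.sin_add_two_pi]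
  have hshift : ∀ θ, ENNReal.ofReal r • (twistFun 0 φ ⁻¹' W).indicator (1 : ℂ → ENNReal)
      (Complex.polarCoord.symm (r, θ)) = h (θ + φ r) := by
    intro θ
    have e : twistFun 0 φ (Complex.polarCoord.symm (r, θ)) =
        Complex.polarCoord.symm (r, θ + φ r) := by
      simp only [twistFun, sub_zero, zero_add, Complex.norm_polarCoord_symm, abs_of_pos hr]
      simp only [Complex.polarCoord_symm_apply, Complex.ofReal_cos, Complex.ofReal_sin,
        ← Complex.exp_mul_I, Complex.ofReal_add, add_mul, Complex.exp_add, mul_assoc]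
    simp only [hh]
    rw [← e]
    rfl
  simp only [hshift]
  have hpi : (0 : ℝ) < 2 * Real.pi := by positivity
  have I1 : ∫⁻ θ in Ioo (-Real.pi) Real.pi, h (θ + φ r) =
      ∫⁻ θ in Ioc (-Real.pi + φ r) (-Real.pi + φ r + 2 * Real.pi), h θ := by
    rw [setLIntegral_congr Ioo_ae_eq_Ioc]
    have := (measurePreserving_add_right volume (φ r)).setLIntegral_comp_preimage_emb
      (measurableEmbedding_addRight (φ r)) h
      (Ioc (-Real.pi + φ r) (-Real.pi + φ r + 2 * Real.pi))
    rw [← this]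
    congr 2
    ext θ; simp only [mem_Ioc, mem_preimage]; constructor <;> rintro ⟨a, b⟩ <;>
      constructor <;> linarith
  have I2 : ∫⁻ θ in Ioo (-Real.pi) Real.pi, h θ =
      ∫⁻ θ in Ioc (-Real.pi) (-Real.pi + 2 * Real.pi), h θ := by
    rw [setLIntegral_congr Ioo_ae_eq_Ioc]
    congr 3; ring
  have hinv : ∀ (g : AddSubgroup.zmultiples (2 * Real.pi)) (x : ℝ), h (g +ᵥ x) = h x := by
    rintro ⟨g, hg⟩ x
    obtain ⟨n, rfl⟩ := AddSubgroup.mem_zmultiples_iff.1 hg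
    change h (n • (2 * Real.pi) + x) = h x
    rw [add_comm]
    exact hper.zsmul n x
  rw [I1, I2]
  exact (isAddFundamentalDomain_Ioc hpi _).setLIntegral_eq (isAddFundamentalDomain_Ioc hpi _) h hinv

theorem dense_compl_countable {E : Set ℂ} (hE : E.Countable) {U : Set ℂ} (hU : IsOpen U)
    (hne : U.Nonempty) : ∃ z ∈ U, z ∉ E := by
  obtain ⟨z, hz, hz'⟩ := (hE.dense_compl ℝ).exists_mem_open hU hne
  exact ⟨z, hz', hz⟩

theorem isPreconnected_ball_diff {E : Set ℂ} (hE : E.Countable) (x : ℂ) (r : ℝ) :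
    IsPreconnected (ball x r \ E) := by
  rcases le_or_gt r 0 with hr | hr
  · simpa [ball_eq_empty.2 hr] using isPreconnected_empty
  -- the ball is homeomorphic to the plane
  set e := OpenPartialHomeomorph.univBall x r
  have he : e.target = ball x r := OpenPartialHomeomorph.univBall_target x hr
  have hs : e.source = univ := OpenPartialHomeomorph.univBall_source x r
  have hinj : Function.Injective e := by
    rw [← injOn_univ, ← hs]; exact e.injOn
  have hc : Continuous e := OpenPartialHomeomorph.continuous_univBall x r
  have hp : (e ⁻¹' E).Countable := hE.preimage hinj
  have h1 := (hp.isConnected_compl_of_one_lt_rank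
    (by rw [Complex.rank_real_complex]; norm_num)).isPreconnected.image e hc.continuousOn
  have h2 : e '' (e ⁻¹' E)ᶜ = ball x r \ E := by
    ext z
    constructor
    · rintro ⟨y, hy, rfl⟩
      exact ⟨he ▸ e.map_source (hs ▸ mem_univ y), hy⟩
    · rintro ⟨hz, hzE⟩
      rw [← he] at hz
      refine ⟨e.symm z, ?_, e.right_inv hz⟩
      simpa [e.right_inv hz] using hzE
  rwa [h2] at h1

/-- Removing a countable set does not disconnect an open subset of the plane. -/
theorem isPreconnected_diff {U E : Set ℂ} (hU : IsOpen U) (hc : IsPreconnected U)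
    (hE : E.Countable) : IsPreconnected (U \ E) := by
  intro u v hu hv huv hneu hnev
  by_contra hcon
  -- the points around which, up to `E`, only `w` is seen
  set T : Set ℂ → Set ℂ := fun w => {y | ∃ c r, y ∈ ball c r ∧ ball c r ⊆ U ∧ ball c r \ E ⊆ w}
    with hT
  have hTo : ∀ w, IsOpen (T w) := by
    intro w
    rw [isOpen_iff_mem_nhds]
    rintro y ⟨c, r, hy, h1, h2⟩
    exact mem_of_superset (isOpen_ball.mem_nhds hy) fun y' hy' => ⟨c, r, hy', h1, h2⟩
  have hcov : U ⊆ T u ∪ T v := by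
    intro y hy
    obtain ⟨r, hr, hrU⟩ := Metric.isOpen_iff.1 hU y hy
    have hsub : ball y r \ E ⊆ u ∪ v := (sdiff_subset_sdiff_left hrU).trans huv
    by_cases hv' : (ball y r \ E ∩ v).Nonempty
    · by_cases hu' : (ball y r \ E ∩ u).Nonempty
      · exact absurd ((isPreconnected_ball_diff hE y r u v hu hv hsub hu' hv').mono
          (inter_subset_inter_left _ (sdiff_subset_sdiff_left hrU))) hcon
      · refine Or.inr ⟨y, r, mem_ball_self hr, hrU, fun z hz => (hsub hz).resolve_left ?_⟩
        exact fun h => hu' ⟨z, hz, h⟩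
    · refine Or.inl ⟨y, r, mem_ball_self hr, hrU, fun z hz => (hsub hz).resolve_right ?_⟩
      exact fun h => hv' ⟨z, hz, h⟩
  obtain ⟨a, haU, hau⟩ := hneu
  obtain ⟨b, hbU, hbv⟩ := hnev
  have ha : (U ∩ T u).Nonempty := by
    refine ⟨a, haU.1, (hcov haU.1).resolve_right ?_⟩
    rintro ⟨c, r, h1, -, h3⟩
    exact hcon ⟨a, haU, hau, h3 ⟨h1, haU.2⟩⟩
  have hb : (U ∩ T v).Nonempty := by
    refine ⟨b, hbU.1, (hcov hbU.1).resolve_left ?_⟩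
    rintro ⟨c, r, h1, -, h3⟩
    exact hcon ⟨b, hbU, h3 ⟨h1, hbU.2⟩, hbv⟩
  obtain ⟨y, -, ⟨c, r, h1, h2, h3⟩, ⟨c', r', h1', h2', h3'⟩⟩ :=
    hc (T u) (T v) (hTo u) (hTo v) hcov ha hb
  obtain ⟨z, ⟨hz, hz'⟩, hzE⟩ := dense_compl_countable hE (isOpen_ball.inter isOpen_ball)
    ⟨y, h1, h1'⟩
  exact hcon ⟨z, ⟨h2 hz, hzE⟩, h3 ⟨hz, hzE⟩, h3' ⟨hz', hzE⟩⟩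

theorem isPreconnected_annulus (x : ℂ) {s t : ℝ} (hs : 0 < s) :
    IsPreconnected {z : ℂ | s < dist z x ∧ dist z x < t} := by
  rcases le_or_gt t 0 with ht | ht
  · convert isPreconnected_empty
    ext z
    simp only [mem_ofPred_eq, mem_empty_iff_false, iff_false, not_and, not_lt]
    exact fun _ => ht.trans dist_nonneg
  have hconv : Convex ℝ {w : ℂ | Real.log s < w.re ∧ w.re < Real.log t} :=
    (convex_halfSpace_re_gt _).inter (convex_halfSpace_re_lt _)
  have h1 := hconv.isPreconnected.image (fun w => x + Complex.exp w)
    (by fun_prop)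
  convert h1 using 1
  ext z
  simp only [mem_ofPred_eq, mem_image]
  constructor
  · rintro ⟨h1, h2⟩
    rw [dist_eq_norm] at h1 h2
    have hne : z - x ≠ 0 := norm_pos_iff.1 (hs.trans h1)
    refine ⟨Complex.log (z - x), ?_, by rw [Complex.exp_log hne]; ring⟩
    rw [Complex.log_re]
    exact ⟨Real.log_lt_log hs h1, Real.log_lt_log (hs.trans h1) h2⟩
  · rintro ⟨w, ⟨h1, h2⟩, rfl⟩
    rw [dist_eq_norm, add_sub_cancel_left, Complex.norm_exp]
    exact ⟨(Real.log_lt_iff_lt_exp hs).1 h1, (Real.lt_log_iff_exp_lt ht).1 h2⟩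

/-- A half turn about the midpoint of two points, damped to the identity. -/
theorem exists_push_small {c : ℂ} {r : ℝ} {y : ℂ} (hy : dist y c < r / 2) :
    ∃ g : ℂ ≃ₜ ℂ, MP g ∧ (∀ z ∉ ball c r, g z = z) ∧ g c = y := by
  set m : ℂ := (c + y) / 2 with hm
  have hr : 0 < r := by linarith [dist_nonneg (x := y) (y := c)]
  set s : ℝ := ‖c - m‖ with hs
  have hs' : s = dist y c / 2 := by
    rw [hs, hm, dist_eq_norm, ← norm_neg]
    have : -(c - (c + y) / 2) = (y - c) / 2 := by ring
    rw [this, norm_div]; simp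
  have hsr : s < r / 2 := by linarith
  set φ : ℝ → ℝ := fun t => Real.pi * max 0 ((r / 2 - t) / (r / 2 - s)) with hφ
  have hφc : Continuous φ := by
    have : r / 2 - s ≠ 0 := by linarith
    fun_prop
  refine ⟨twist m φ hφc, twist_mp _ _ _, fun z hz => ?_, ?_⟩
  · have hz' : r / 2 ≤ ‖z - m‖ := by
      rw [mem_ball, not_lt] at hz
      have h1 := dist_triangle z m c
      have h2 : dist m c = s := by rw [hs, dist_comm, dist_eq_norm]
      rw [dist_eq_norm z m] at h1
      linarith
    have : φ ‖z - m‖ = 0 := by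
      simp only [hφ]
      rw [max_eq_left, mul_zero]
      exact div_nonpos_of_nonpos_of_nonneg (by linarith) (by linarith)
    change twistFun m φ z = z
    simp [twistFun, this]
  · have : φ s = Real.pi := by
      simp only [hφ]
      rw [div_self (by linarith), max_eq_right zero_le_one, mul_one]
    change twistFun m φ c = y
    rw [twistFun, ← hs, this, Complex.exp_pi_mul_I, hm]
    ring

/-- Area preserving homeomorphisms supported in a connected open set act transitively on it. -/
theorem exists_push {U : Set ℂ} (hU : IsOpen U) (hc : IsPreconnected U) {a b : ℂ} (ha : a ∈ U)
    (hb : b ∈ U) : ∃ g : ℂ ≃ₜ ℂ, MP g ∧ (∀ z ∉ U, g z = z) ∧ g a = b := by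
  set A : Set ℂ := {y | ∃ g : ℂ ≃ₜ ℂ, MP g ∧ (∀ z ∉ U, g z = z) ∧ g a = y} with hA
  have loc : ∀ y ∈ U, ∃ r > 0, ball y r ⊆ U ∧
      ((∃ y' ∈ ball y r, y' ∈ A) → ball y r ⊆ A) := by
    intro y hy
    obtain ⟨r, hr, hrU⟩ := Metric.isOpen_iff.1 hU y hy
    have st : ∀ y' ∈ ball y (r / 2), ∃ g : ℂ ≃ₜ ℂ, MP g ∧ (∀ z ∉ U, g z = z) ∧ g y = y' := by
      intro y' hy'
      obtain ⟨g, h1, h2, h3⟩ := exists_push_small (c := y) (r := r) (mem_ball.1 hy')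
      exact ⟨g, h1, fun z hz => h2 z fun h => hz (hrU h), h3⟩
    refine ⟨r / 2, by positivity, (ball_subset_ball (by linarith)).trans hrU, ?_⟩
    rintro ⟨y', hy', g, g1, g2, g3⟩ y'' hy''
    obtain ⟨k, k1, k2, k3⟩ := st y' hy'
    obtain ⟨l, l1, l2, l3⟩ := st y'' hy''
    refine ⟨(g.trans k.symm).trans l, (g1.trans k1.symm).trans l1, fun z hz => ?_, ?_⟩
    · simp [g2 z hz, fix_symm (k2 z hz), l2 z hz]
    · simp [g3, ← k3, l3]
  have h := hc.subset_of_closure_inter_subset (u := A ∩ U) ?_ ⟨a, ha, ⟨_, MP.refl,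
    fun _ _ => rfl, rfl⟩, ha⟩ ?_
  · exact (h hb).1
  · rw [isOpen_iff_mem_nhds]
    rintro y ⟨hyA, hyU⟩
    obtain ⟨r, hr, hrU, h⟩ := loc y hyU
    exact mem_of_superset (ball_mem_nhds y hr)
      (subset_inter (h ⟨y, mem_ball_self hr, hyA⟩) hrU)
  · rintro y ⟨hycl, hyU⟩
    obtain ⟨r, hr, hrU, h⟩ := loc y hyU
    obtain ⟨y', hy', hd⟩ := Metric.mem_closure_iff.1 hycl r hr
    exact ⟨h ⟨y', by rwa [mem_ball, dist_comm], hy'.1⟩ (mem_ball_self hr), hyU⟩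

/-! ### Infinite products of pushes -/

/-- Area preserving homeomorphisms supported in disjoint sets `A m` of geometrically decreasing
diameter can be performed simultaneously: the finite products are uniformly Cauchy, and so are
their inverses. -/
theorem exists_infinite_product {h : ℕ → ℂ ≃ₜ ℂ} {A : ℕ → Set ℂ} {C : ℝ} (hC : 0 ≤ C)
    (hmp : ∀ m, MP (h m)) (hsupp : ∀ m, ∀ z ∉ A m, h m z = z)
    (hdisj : ∀ m n, m ≠ n → Disjoint (A m) (A n))
    (hdiam : ∀ m, ∀ z ∈ A m, ∀ w ∈ A m, dist z w ≤ C * (1 / 2) ^ m) :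
    ∃ g : ℂ ≃ₜ ℂ, MP g ∧ (∀ m, ∀ z ∈ A m, g z = h m z) ∧ ∀ z, (∀ m, z ∉ A m) → g z = z := by
  have hmaps : ∀ m, ∀ z ∈ A m, h m z ∈ A m := by
    intro m z hz
    by_contra hn
    exact hn (by rwa [(h m).injective (hsupp m _ hn)])
  have hmaps' : ∀ m, ∀ z ∈ A m, (h m).symm z ∈ A m := by
    intro m z hz
    by_contra hn
    have := hsupp m _ hn
    rw [Homeomorph.apply_symm_apply] at this
    exact hn (by rwa [← this])
  have hpos : ∀ m, 0 ≤ C * (1 / 2) ^ m := fun m => by positivity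
  let P : ℕ → ℂ ≃ₜ ℂ := fun N => Nat.rec (Homeomorph.refl ℂ) (fun N Q => Q.trans (h N)) N
  have P0 : P 0 = Homeomorph.refl ℂ := rfl
  have PS : ∀ N, P (N + 1) = (P N).trans (h N) := fun N => rfl
  have hPmp : ∀ N, MP (P N) := by
    intro N
    induction N with
    | zero => exact MP.refl
    | succ N ih => rw [PS]; exact ih.trans (hmp N)
  have hPid : ∀ N z, (∀ m < N, z ∉ A m) → P N z = z := by
    intro N
    induction N with
    | zero => intro z _; rfl
    | succ N ih =>
      intro z hz
      rw [PS, Homeomorph.trans_apply, ih z fun m hm => hz m (by omega), hsupp N z (hz N (by omega))]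
  have hPA : ∀ N m, m < N → ∀ z ∈ A m, P N z = h m z := by
    intro N
    induction N with
    | zero => intro m hm; omega
    | succ N ih =>
      intro m hm z hz
      rw [PS, Homeomorph.trans_apply]
      rcases Nat.lt_succ_iff_lt_or_eq.1 hm with hlt | rfl
      · rw [ih m hlt z hz]
        exact hsupp N _ (disjoint_left.1 (hdisj m N hlt.ne) (hmaps m z hz))
      · rw [hPid m z fun k hk => disjoint_left.1 (hdisj m k hk.ne') hz]
  have hnear : ∀ N, Near (C * (1 / 2) ^ N) (P (N + 1)) (P N) := by
    intro N z
    refine ⟨?_, ?_⟩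
    · rw [PS, Homeomorph.trans_apply]
      by_cases hz : P N z ∈ A N
      · exact hdiam N _ (hmaps N _ hz) _ hz
      · rw [hsupp N _ hz, dist_self]; exact hpos N
    · have hfix : ∀ w ∈ A N, (P N).symm w = w := fun w hw =>
        fix_symm (hPid N w fun m hm => disjoint_left.1 (hdisj N m hm.ne') hw)
      have e : (P (N + 1)).symm z = (P N).symm ((h N).symm z) := rfl
      rw [e]
      by_cases hz : z ∈ A N
      · rw [hfix z hz, hfix _ (hmaps' N z hz)]
        exact hdiam N _ (hmaps' N _ hz) _ hz
      · rw [fix_symm (hsupp N z hz), dist_self]; exact hpos N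
  obtain ⟨g, hg, hg'⟩ := exists_limit hnear
  refine ⟨g, MP.of_tendsto hPmp hg hg', fun m z hz => ?_, fun z hz => ?_⟩
  · refine tendsto_nhds_unique (hg z) (tendsto_const_nhds.congr' ?_)
    filter_upwards [eventually_gt_atTop m] with N hN
    rw [hPA N m hN z hz]
  · refine tendsto_nhds_unique (hg z) (tendsto_const_nhds.congr' ?_)
    filter_upwards with N
    rw [hPid N z fun m _ => hz m]

/-- The annulus about `x` from which the `m`-th push of an infinite family is performed. -/
def ann (x : ℂ) (R : ℕ → ℝ) (m : ℕ) : Set ℂ :=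
  {z | 2 * R (m + 2) < dist z x ∧ dist z x < 2 * R m}

theorem halving_le {R : ℕ → ℝ} (hR : ∀ m, R (m + 1) < R m / 2) (m : ℕ) :
    R m ≤ R 0 * (1 / 2) ^ m := by
  induction m with
  | zero => simp
  | succ m ih => have := hR m; rw [pow_succ]; linarith

theorem halving_antitone {R : ℕ → ℝ} (hpos : ∀ m, 0 < R m) (hR : ∀ m, R (m + 1) < R m / 2) :
    Antitone R := antitone_nat_of_succ_le fun m => by linarith [hR m, hpos m]

theorem ann_disjoint {x : ℂ} {R : ℕ → ℝ} (hpos : ∀ m, 0 < R m)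
    (hR : ∀ m, R (m + 1) < R m / 2) {m n : ℕ} (h : m + 2 ≤ n) :
    Disjoint (ann x R m) (ann x R n) := by
  rw [disjoint_left]
  intro z hz hz'
  have := halving_antitone hpos hR h
  linarith [hz.1, hz'.2]

/-- Pushes in annuli no two of which are consecutive. -/
theorem infinite_push_aux {x : ℂ} {R : ℕ → ℝ} (hpos : ∀ m, 0 < R m)
    (hR : ∀ m, R (m + 1) < R m / 2) {a b : ℕ → ℂ} (ha : Function.Injective a)
    (hb : Function.Injective b) (hab : ∀ m n, a m ≠ b n) (haA : ∀ m, a m ∈ ann x R m)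
    (hbA : ∀ m, b m ∈ ann x R m) {E : Set ℂ} (hEc : E.Countable) (hE : IsClosed E)
    (haE : ∀ m, a m ∉ E) (hbE : ∀ m, b m ∉ E) (T : Set ℕ)
    (hT : ∀ m ∈ T, ∀ n ∈ T, m < n → m + 2 ≤ n) :
    ∃ g : ℂ ≃ₜ ℂ, MP g ∧ (∀ z ∉ ball x (2 * R 0), g z = z) ∧ (∀ z ∈ E, g z = z) ∧
      (∀ m ∈ T, g (a m) = b m) ∧ ∀ m ∉ T, g (a m) = a m ∧ g (b m) = b m := by
  -- the other points, as far as they can lie in the `m`-th annulus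
  let Q : ℕ → Set ℂ := fun m => (a '' {j | j ≤ m + 1 ∧ j ≠ m}) ∪ (b '' {j | j ≤ m + 1 ∧ j ≠ m})
  have hQf : ∀ m, (Q m).Finite := by
    intro m
    have : {j | j ≤ m + 1 ∧ j ≠ m}.Finite := (finite_Iic (m + 1)).subset fun j hj => hj.1
    exact (this.image a).union (this.image b)
  let U : ℕ → Set ℂ := fun m => ann x R m \ (E ∪ Q m)
  have hannO : ∀ m, IsOpen (ann x R m) := fun m =>
    (isOpen_lt continuous_const (continuous_id.dist continuous_const)).inter
      (isOpen_lt (continuous_id.dist continuous_const) continuous_const)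
  have hUO : ∀ m, IsOpen (U m) := fun m => (hannO m).sdiff (hE.union (hQf m).isClosed)
  have hUc : ∀ m, IsPreconnected (U m) := fun m =>
    isPreconnected_diff (hannO m) (isPreconnected_annulus x (by linarith [hpos (m + 2)]))
      (hEc.union (hQf m).countable)
  have haU : ∀ m, a m ∈ U m := by
    rintro m
    refine ⟨haA m, ?_⟩
    rintro (h | ⟨j, hj, h⟩ | ⟨j, hj, h⟩)
    · exact haE m h
    · exact hj.2 (ha h)
    · exact hab _ _ h.symm
  have hbU : ∀ m, b m ∈ U m := by
    rintro m
    refine ⟨hbA m, ?_⟩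
    rintro (h | ⟨j, hj, h⟩ | ⟨j, hj, h⟩)
    · exact hbE m h
    · exact hab _ _ h
    · exact hj.2 (hb h)
  have hnot : ∀ m j, j ≠ m → a j ∉ U m ∧ b j ∉ U m := by
    intro m j hj
    by_cases hle : j ≤ m + 1
    · exact ⟨fun h => h.2 (Or.inr (Or.inl ⟨j, ⟨hle, hj⟩, rfl⟩)),
        fun h => h.2 (Or.inr (Or.inr ⟨j, ⟨hle, hj⟩, rfl⟩))⟩
    · have hd := ann_disjoint (x := x) hpos hR (show m + 2 ≤ j by omega)
      exact ⟨fun h => disjoint_left.1 hd h.1 (haA j), fun h => disjoint_left.1 hd h.1 (hbA j)⟩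
  choose p hpm hps hpa using fun m => exists_push (hUO m) (hUc m) (haU m) (hbU m)
  classical
  obtain ⟨g, hg, hgA, hgid⟩ := exists_infinite_product
    (h := fun m => if m ∈ T then p m else Homeomorph.refl ℂ) (A := fun m => {z ∈ U m | m ∈ T})
    (C := 4 * R 0) (by linarith [hpos 0])
    (fun m => by split_ifs; exacts [hpm m, MP.refl])
    (fun m z hz => by
      by_cases hm : m ∈ T
      · simp only [hm, if_true]; exact hps m z fun h => hz ⟨h, hm⟩
      · simp [hm])
    (fun m n hmn => by
      rw [disjoint_left]
      rintro z ⟨hz, hm⟩ ⟨hz', hn⟩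
      rcases lt_or_gt_of_ne hmn with h | h
      · exact disjoint_left.1 (ann_disjoint hpos hR (hT m hm n hn h)) hz.1 hz'.1
      · exact disjoint_left.1 (ann_disjoint hpos hR (hT n hn m hm h)) hz'.1 hz.1)
    (fun m z hz w hw => by
      have h1 := hz.1.1.2
      have h2 := hw.1.1.2
      have h3 := dist_triangle_right z w x
      have h4 := halving_le hR m
      linarith)
  refine ⟨g, hg, fun z hz => hgid z fun m h => hz ?_, fun z hz => hgid z fun m h => ?_,
    fun m hm => ?_, fun m hm => ⟨hgid _ fun n h => ?_, hgid _ fun n h => ?_⟩⟩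
  · have h1 := h.1.1.2
    have h2 := halving_antitone hpos hR (Nat.zero_le m)
    rw [mem_ball]; linarith
  · exact h.1.2 (Or.inl hz)
  · rw [hgA m (a m) ⟨haU m, hm⟩]
    simp only [hm, if_true]
    exact hpa m
  · exact (hnot n m fun e => hm (e ▸ h.2)).1 h.1
  · exact (hnot n m fun e => hm (e ▸ h.2)).2 h.1

/-- A sequence of points shrinking to `x` can be pushed to another one, keeping a closed countable
set fixed: annuli of the same parity are disjoint, so even and odd indices are treated in turn. -/
theorem infinite_push {x : ℂ} {R : ℕ → ℝ} (hpos : ∀ m, 0 < R m)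
    (hR : ∀ m, R (m + 1) < R m / 2) {a b : ℕ → ℂ} (ha : Function.Injective a)
    (hb : Function.Injective b) (hab : ∀ m n, a m ≠ b n) (haA : ∀ m, a m ∈ ann x R m)
    (hbA : ∀ m, b m ∈ ann x R m) {E : Set ℂ} (hEc : E.Countable) (hE : IsClosed E)
    (haE : ∀ m, a m ∉ E) (hbE : ∀ m, b m ∉ E) :
    ∃ g : ℂ ≃ₜ ℂ, MP g ∧ (∀ z ∉ ball x (2 * R 0), g z = z) ∧ (∀ z ∈ E, g z = z) ∧
      ∀ m, g (a m) = b m := by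
  obtain ⟨g, hg, hgs, hgE, hgT, hgT'⟩ := infinite_push_aux hpos hR ha hb hab haA hbA hEc hE haE hbE
    {m | Even m} (fun m hm n hn h => by
      obtain ⟨k, rfl⟩ := hm; obtain ⟨l, rfl⟩ := hn; omega)
  obtain ⟨f, hf, hfs, hfE, hfT, hfT'⟩ := infinite_push_aux hpos hR ha hb hab haA hbA hEc hE haE hbE
    {m | Odd m} (fun m hm n hn h => by
      obtain ⟨k, rfl⟩ := hm; obtain ⟨l, rfl⟩ := hn; omega)
  refine ⟨g.trans f, hg.trans hf, fun z hz => ?_, fun z hz => ?_, fun m => ?_⟩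
  · rw [Homeomorph.trans_apply, hgs z hz, hfs z hz]
  · rw [Homeomorph.trans_apply, hgE z hz, hfE z hz]
  · rw [Homeomorph.trans_apply]
    rcases Nat.even_or_odd m with h | h
    · rw [hgT m h]
      exact (hfT' m (Nat.not_odd_iff_even.2 h)).2
    · rw [(hgT' m (Nat.not_even_iff_odd.2 h)).1]
      exact hfT m h

/-! ### Orbits converging to a fixed point -/

/-- Composing with a homeomorphism supported in a sufficiently small disc is a small
perturbation. -/
theorem exists_support_near (F : ℂ ≃ₜ ℂ) (x : ℂ) {ε : ℝ} (hε : 0 < ε) :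
    ∃ η > 0, ∀ g : ℂ ≃ₜ ℂ, (∀ z ∉ ball x η, g z = z) → Near ε (F.trans g) F := by
  have hc : ContinuousAt F.symm x := F.symm.continuous.continuousAt
  obtain ⟨η₁, hη₁, h₁⟩ := Metric.continuousAt_iff.1 hc (ε / 2) (half_pos hε)
  refine ⟨min η₁ (ε / 2), lt_min hη₁ (half_pos hε), fun g hg z => ⟨?_, ?_⟩⟩
  · rw [Homeomorph.trans_apply]
    by_cases h : F z ∈ ball x (min η₁ (ε / 2))
    · have h' : g (F z) ∈ ball x (min η₁ (ε / 2)) := by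
        by_contra hn
        exact hn (by rwa [g.injective (hg _ hn)])
      have := dist_triangle_right (g (F z)) (F z) x
      have h1 := (mem_ball.1 h).trans_le (min_le_right _ _)
      have h2 := (mem_ball.1 h').trans_le (min_le_right _ _)
      linarith
    · rw [hg _ h, dist_self]; exact hε.le
  · have e : (F.trans g).symm z = F.symm (g.symm z) := rfl
    rw [e]
    by_cases h : z ∈ ball x (min η₁ (ε / 2))
    · have h' : g.symm z ∈ ball x (min η₁ (ε / 2)) := by
        by_contra hn
        have := hg _ hn
        rw [Homeomorph.apply_symm_apply] at this
        exact hn (by rwa [← this])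
      have := dist_triangle_right (F.symm (g.symm z)) (F.symm z) (F.symm x)
      have h1 := h₁ ((mem_ball.1 h).trans_le (min_le_left _ _))
      have h2 := h₁ ((mem_ball.1 h').trans_le (min_le_left _ _))
      linarith
    · rw [fix_symm (hg _ h), dist_self]; exact hε.le

/-- A small perturbation creates a forward orbit converging to the fixed point `x` and avoiding a
given countable set, without changing `F` on the closed countable set `B`. -/
theorem exists_landing {F : ℂ ≃ₜ ℂ} (hF : Adm F) {x : ℂ} (hx : F x = x) {B : Set ℂ}
    (hBc : B.Countable) (hB : IsClosed B) (hxB : x ∈ B) {Z : Set ℂ} (hZ : Z.Countable)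
    {ε : ℝ} (hε : 0 < ε) :
    ∃ (F' : ℂ ≃ₜ ℂ) (z : ℕ → ℂ), Adm F' ∧ Near ε F' F ∧ (∀ y ∈ B, F' y = F y) ∧
      Function.Injective z ∧ (∀ m, z m ∉ Z) ∧ Tendsto z atTop (𝓝 x) ∧
      ∀ m, F' (z m) = z (m + 1) := by
  obtain ⟨η, hη, hnear⟩ := exists_support_near F x hε
  have hEc : (F '' B).Countable := hBc.image _
  have hE : IsClosed (F '' B) := F.isClosedMap B hB
  set W : Set ℂ := Z ∪ B ∪ F '' B with hW
  have hWc : W.Countable := (hZ.union hBc).union hEc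
  set N : ℂ → ℝ := fun w => max (dist w x) (dist (F w) x) with hN
  set n : ℂ → ℝ := fun w => min (dist w x) (dist (F w) x) with hn
  have hNc : Continuous N := (continuous_id.dist continuous_const).max
    (F.continuous.dist continuous_const)
  have hNx : N x = 0 := by simp [hN, hx]
  have hpick : ∀ r > 0, ∃ w, w ∉ W ∧ N w < r := by
    intro r hr
    obtain ⟨w, hw, hw'⟩ := dense_compl_countable hWc (isOpen_lt hNc continuous_const)
      (⟨x, by rw [mem_ofPred_eq, hNx]; exact hr⟩ : {w | N w < r}.Nonempty)
    exact ⟨w, hw', hw⟩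
  have hWx : ∀ w, w ∉ W → w ≠ x := fun w hw e => hw (Or.inl (Or.inr (e ▸ hxB)))
  have hWFx : ∀ w, w ∉ W → F w ≠ x := fun w hw e =>
    hWx w hw (F.injective (e.trans hx.symm))
  have hnpos : ∀ w, w ∉ W → 0 < n w := fun w hw =>
    lt_min (dist_pos.2 (hWx w hw)) (dist_pos.2 (hWFx w hw))
  have hnN : ∀ w, n w ≤ N w := fun w => (min_le_left _ _).trans (le_max_left _ _)
  obtain ⟨w₀, hw₀, hw₀'⟩ := hpick (η / 2) (half_pos hη)
  choose nx hnx hnx' using fun w : {w // w ∉ W} => hpick (n w / 2) (half_pos (hnpos w w.2))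
  let s : ℕ → {w // w ∉ W} := fun m => Nat.rec ⟨w₀, hw₀⟩ (fun _ w => ⟨nx w, hnx w⟩) m
  set z : ℕ → ℂ := fun m => (s m : {w // w ∉ W}).1 with hz
  have hzW : ∀ m, z m ∉ W := fun m => (s m).2
  have hzn : ∀ m, N (z (m + 1)) < n (z m) / 2 := fun m => hnx' (s m)
  have hz0 : N (z 0) < η / 2 := hw₀'
  set R : ℕ → ℝ := fun m => N (z m) with hR'
  have hpos : ∀ m, 0 < R m := fun m => (hnpos _ (hzW m)).trans_le (hnN _)
  have hR : ∀ m, R (m + 1) < R m / 2 := fun m => by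
    have := hzn m; have := hnN (z m); simp only [hR']; linarith
  have hzl : ∀ m, dist (z m) x ≤ R m := fun m => le_max_left _ _
  have hFl : ∀ m, dist (F (z m)) x ≤ R m := fun m => le_max_right _ _
  have hzg : ∀ m, 2 * R (m + 1) < dist (z m) x := fun m => by
    have h1 := hzn m
    have h2 : n (z m) ≤ dist (z m) x := min_le_left _ _
    simp only [hR']; linarith
  have hFg : ∀ m, 2 * R (m + 1) < dist (F (z m)) x := fun m => by
    have h1 := hzn m
    have h2 : n (z m) ≤ dist (F (z m)) x := min_le_right _ _
    simp only [hR']; linarith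
  have hzinj : Function.Injective z := by
    have : StrictAnti fun m => dist (z m) x := strictAnti_nat_of_succ_lt fun m => by
      have := hzl (m + 1); have := hzg m; have := hpos (m + 1); linarith
    intro i j hij
    exact this.injective (show dist (z i) x = dist (z j) x by rw [hij])
  have hFx : ∀ m, F (z m) - x ≠ 0 := fun m => sub_ne_zero.2 (hWFx _ (hzW m))
  -- a generic dilation about `x` yields intermediate points disjoint from all the others
  set Y : Set ℂ := F '' B ∪ range (fun m => F (z m)) ∪ range z with hY
  have hYc : Y.Countable := (hEc.union (countable_range _)).union (countable_range _)
  have hbad : (⋃ m, (fun t : ℝ => x + t * (F (z m) - x)) ⁻¹' Y).Countable := by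
    refine countable_iUnion fun m => hYc.preimage_of_injOn ?_
    intro t _ t' _ h
    have h' := mul_right_cancel₀ (hFx m) (add_left_cancel h)
    exact_mod_cast h'
  obtain ⟨t, ht, ht1, ht2⟩ := (hbad.dense_compl ℝ).exists_mem_open isOpen_Ioo
    (nonempty_Ioo.2 (by norm_num : (1 : ℝ) < 2))
  set d : ℕ → ℂ := fun m => x + t * (F (z m) - x) with hd
  have hdY : ∀ m, d m ∉ Y := fun m h => ht (mem_iUnion.2 ⟨m, h⟩)
  have hdd : ∀ m, dist (d m) x = t * dist (F (z m)) x := fun m => by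
    rw [dist_eq_norm, dist_eq_norm, hd]
    simp only [add_sub_cancel_left, norm_mul, Complex.norm_real, Real.norm_eq_abs]
    rw [abs_of_pos (by linarith)]
  have hdinj : Function.Injective d := by
    intro i j hij
    have h1 := mul_left_cancel₀ (by exact_mod_cast (by linarith : t ≠ 0)) (add_left_cancel hij)
    exact hzinj (F.injective (sub_left_injective h1))
  have hFinj : Function.Injective fun m => F (z m) := F.injective.comp hzinj
  have hzinj' : Function.Injective fun m => z (m + 1) := fun i j h => by
    have := @hzinj (i + 1) (j + 1) h; omega
  have hFann : ∀ m, F (z m) ∈ ann x R m := fun m => by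
    have h1 := hFg m; have h2 := hFl m; have h3 := hpos m; have h4 := hR (m + 1)
    have h5 := hpos (m + 1)
    exact ⟨by linarith, by linarith⟩
  have hzann : ∀ m, z (m + 1) ∈ ann x R m := fun m => by
    have h1 := hzg (m + 1); have h2 := hzl (m + 1); have h3 := hpos m; have h4 := hR m
    exact ⟨h1, by linarith⟩
  have hdann : ∀ m, d m ∈ ann x R m := fun m => by
    have h1 := hFann m
    have h2 := hFl m
    have h3 : 0 < dist (F (z m)) x := dist_pos.2 (hWFx _ (hzW m))
    refine ⟨?_, ?_⟩
    · rw [hdd]; nlinarith [h1.1]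
    · rw [hdd]; nlinarith [hpos m]
  have hFE : ∀ m, F (z m) ∉ F '' B := by
    rintro m ⟨y, hy, e⟩
    exact hzW m (Or.inl (Or.inr (F.injective e ▸ hy)))
  obtain ⟨g₁, hg₁, hs₁, hE₁, h₁⟩ := infinite_push hpos hR hFinj hdinj
    (fun i j e => hdY j (Or.inl (Or.inr ⟨i, e⟩))) hFann hdann hEc hE hFE
    fun m h => hdY m (Or.inl (Or.inl h))
  obtain ⟨g₂, hg₂, hs₂, hE₂, h₂⟩ := infinite_push hpos hR hdinj hzinj'
    (fun i j e => hdY i (Or.inr ⟨j + 1, e.symm⟩)) hdann hzann hEc hE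
    (fun m h => hdY m (Or.inl (Or.inl h))) fun m h => hzW (m + 1) (Or.inr h)
  have hsupp : ∀ z ∉ ball x η, (g₁.trans g₂) z = z := by
    intro w hw
    have hw' : w ∉ ball x (2 * R 0) := fun h => hw (ball_subset_ball (by linarith) h)
    rw [Homeomorph.trans_apply, hs₁ w hw', hs₂ w hw']
  have hAdm : Adm (g₁.trans g₂) := by
    refine ⟨hg₁.trans hg₂, ‖x‖ + η, fun w hw => hsupp w fun h => ?_⟩
    rw [mem_ball, dist_eq_norm] at h
    have := norm_sub_norm_le w x
    linarith
  refine ⟨F.trans (g₁.trans g₂), z, hF.trans hAdm, hnear _ hsupp, fun y hy => ?_, hzinj,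
    fun m h => hzW m (Or.inl (Or.inl h)), ?_, fun m => ?_⟩
  · rw [Homeomorph.trans_apply, Homeomorph.trans_apply, hE₁ _ (mem_image_of_mem _ hy),
      hE₂ _ (mem_image_of_mem _ hy)]
  · rw [tendsto_iff_dist_tendsto_zero]
    refine squeeze_zero (fun _ => dist_nonneg) (fun m => (hzl m).trans (halving_le hR m)) ?_
    have := (tendsto_pow_atTop_nhds_zero_of_lt_one (r := (1 / 2 : ℝ)) (by norm_num)
          (by norm_num)).const_mul (R 0)
    simpa using this
  · rw [Homeomorph.trans_apply, Homeomorph.trans_apply]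
    exact (congrArg g₂ (h₁ m)).trans (h₂ m)

/-! ### Small homeomorphisms moving finitely many points -/

/-- Finitely many points of `J` are moved inside the tiles of a tiling of the plane; `idx` sends a
point to its tile, and tiles are preserved. -/
theorem exists_push_in_tiles {ι : Type*} (idx : ℂ → ι) {J : Finset ℕ} {a b : ℕ → ℂ}
    (ha : InjOn a J) (hb : InjOn b J) (hab : ∀ i ∈ J, ∀ j ∈ J, a i ≠ b j) {E : Set ℂ}
    (hEc : E.Countable) (hE : IsClosed E) (haE : ∀ i ∈ J, a i ∉ E) (hbE : ∀ i ∈ J, b i ∉ E)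
    {ρ : ℝ} (hρ : 0 < ρ) (hd : ∀ i ∈ J, dist (a i) (b i) < ρ) (I : Finset ℕ) (hIJ : I ⊆ J)
    (hidx : ∀ i ∈ I, ∀ z ∈ ball (a i) ρ, idx z = idx (a i)) :
    ∃ g : ℂ ≃ₜ ℂ, Adm g ∧ (∀ z, idx (g z) = idx z) ∧ (∀ z ∈ E, g z = z) ∧
      (∀ i ∈ I, g (a i) = b i) ∧ ∀ j ∈ J, j ∉ I → g (a j) = a j ∧ g (b j) = b j := by
  classical
  induction I using Finset.induction_on with
  | empty =>
    exact ⟨Homeomorph.refl ℂ, Adm.refl, fun _ => rfl, fun _ _ => rfl, by simp, fun _ _ _ =>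
      ⟨rfl, rfl⟩⟩
  | insert i I hi ih =>
    obtain ⟨g, hg, hgi, hgE, hgI, hgJ⟩ := ih ((Finset.subset_insert _ _).trans hIJ)
      fun j hj => hidx j (Finset.mem_insert_of_mem hj)
    have hiJ : i ∈ J := hIJ (Finset.mem_insert_self _ _)
    set Q : Set ℂ := E ∪ (a '' (J.erase i : Finset ℕ) ∪ b '' (J.erase i : Finset ℕ)) with hQ
    have hQf : (a '' (J.erase i : Finset ℕ) ∪ b '' (J.erase i : Finset ℕ)).Finite :=
      ((Finset.finite_toSet _).image _).union ((Finset.finite_toSet _).image _)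
    have haQ : a i ∉ Q := by
      rintro (h | ⟨j, hj, h⟩ | ⟨j, hj, h⟩)
      · exact haE i hiJ h
      · have hj := Finset.mem_erase.1 hj
        exact hj.1 (ha hj.2 hiJ h)
      · have hj := Finset.mem_erase.1 hj
        exact hab i hiJ j hj.2 h.symm
    have hbQ : b i ∉ Q := by
      rintro (h | ⟨j, hj, h⟩ | ⟨j, hj, h⟩)
      · exact hbE i hiJ h
      · have hj := Finset.mem_erase.1 hj
        exact hab j hj.2 i hiJ h
      · have hj := Finset.mem_erase.1 hj
        exact hj.1 (hb hj.2 hiJ h)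
    obtain ⟨h, hh, hs, hab'⟩ := exists_push (a := a i) (b := b i)
      (isOpen_ball.sdiff (hE.union hQf.isClosed) : IsOpen (ball (a i) ρ \ Q))
      (isPreconnected_diff isOpen_ball (convex_ball _ _).isPreconnected
        (hEc.union hQf.countable))
      ⟨mem_ball_self hρ, haQ⟩ ⟨by rw [mem_ball, dist_comm]; exact hd i hiJ, hbQ⟩
    have hfix : ∀ z ∈ Q, h z = z := fun z hz => hs z fun hn => hn.2 hz
    have hAdm : Adm h := by
      refine ⟨hh, ‖a i‖ + ρ, fun w hw => hs w fun hn => ?_⟩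
      have hn := hn.1
      rw [mem_ball, dist_eq_norm] at hn
      have := norm_sub_norm_le w (a i)
      linarith
    have hmem : ∀ j ∈ J, j ≠ i → a j ∈ Q ∧ b j ∈ Q := fun j hj hji =>
      have hje : j ∈ ((J.erase i : Finset ℕ) : Set ℕ) := Finset.mem_erase.2 ⟨hji, hj⟩
      ⟨Or.inr (Or.inl ⟨j, hje, rfl⟩), Or.inr (Or.inr ⟨j, hje, rfl⟩)⟩
    refine ⟨g.trans h, hg.trans hAdm, fun z => ?_, fun z hz => ?_, fun j hj => ?_,
      fun j hj hj' => ?_⟩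
    · rw [Homeomorph.trans_apply, ← hgi z]
      by_cases hz : g z ∈ ball (a i) ρ \ Q
      · have hz' : h (g z) ∈ ball (a i) ρ \ Q := by
          by_contra hn
          exact hn (by rwa [h.injective (hs _ hn)])
        rw [hidx i (Finset.mem_insert_self _ _) _ hz.1, hidx i (Finset.mem_insert_self _ _) _ hz'.1]
      · rw [hs _ hz]
    · rw [Homeomorph.trans_apply, hgE z hz, hfix z (Or.inl hz)]
    · rw [Homeomorph.trans_apply]
      rcases Finset.mem_insert.1 hj with rfl | hj
      · rw [(hgJ j hiJ hi).1, hab']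
      · rw [hgI j hj]
        exact hfix _ (hmem j (hIJ (Finset.mem_insert_of_mem hj)) fun e => hi (e ▸ hj)).2
    · rw [Finset.mem_insert, not_or] at hj'
      obtain ⟨h1, h2⟩ := hgJ j hj hj'.2
      rw [Homeomorph.trans_apply, Homeomorph.trans_apply, h1, h2]
      exact ⟨hfix _ (hmem j hj hj'.1).1, hfix _ (hmem j hj hj'.1).2⟩

/-- Points are moved by using several tilings one after the other, the tiling numbered `col i`
serving the `i`-th point. -/
theorem exists_push_in_tilings {ι : Type*} (idx : ℕ → ℂ → ι) {D : ℝ}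
    (hD : ∀ k z w, idx k z = idx k w → dist z w ≤ D) {J : Finset ℕ} {a b : ℕ → ℂ}
    (ha : InjOn a J) (hb : InjOn b J) (hab : ∀ i ∈ J, ∀ j ∈ J, a i ≠ b j) {E : Set ℂ}
    (hEc : E.Countable) (hE : IsClosed E) (haE : ∀ i ∈ J, a i ∉ E) (hbE : ∀ i ∈ J, b i ∉ E)
    {ρ : ℝ} (hρ : 0 < ρ) (hd : ∀ i ∈ J, dist (a i) (b i) < ρ) (col : ℕ → ℕ)
    (hidx : ∀ i ∈ J, ∀ z ∈ ball (a i) ρ, idx (col i) z = idx (col i) (a i)) (K : ℕ) :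
    ∃ g : ℂ ≃ₜ ℂ, Adm g ∧ (∀ z, dist (g z) z ≤ K * D) ∧ (∀ z ∈ E, g z = z) ∧
      ∀ j ∈ J, (col j < K → g (a j) = b j) ∧ (K ≤ col j → g (a j) = a j ∧ g (b j) = b j) := by
  induction K with
  | zero =>
    exact ⟨Homeomorph.refl ℂ, Adm.refl, by simp, fun _ _ => rfl, fun _ _ =>
      ⟨fun h => absurd h (Nat.not_lt_zero _), fun _ => ⟨rfl, rfl⟩⟩⟩
  | succ K ih =>
    obtain ⟨g, hg, hgd, hgE, hgJ⟩ := ih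
    obtain ⟨h, hh, hhd, hhE, hhI, hhJ⟩ := exists_push_in_tiles (idx K) ha hb hab hEc hE haE hbE hρ
      hd {i ∈ J | col i = K} (Finset.filter_subset _ _) (fun i hi => by
        obtain ⟨h1, rfl⟩ := Finset.mem_filter.1 hi
        exact hidx i h1)
    refine ⟨g.trans h, hg.trans hh, fun z => ?_, fun z hz => ?_, fun j hj => ⟨fun hc => ?_,
      fun hc => ?_⟩⟩
    · rw [Homeomorph.trans_apply]
      have h1 := hD K _ _ (hhd (g z))
      have h2 := dist_triangle (h (g z)) (g z) z
      have h3 := hgd z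
      push_cast
      linarith
    · rw [Homeomorph.trans_apply, hgE z hz, hhE z hz]
    · rw [Homeomorph.trans_apply]
      rcases Nat.lt_succ_iff_lt_or_eq.1 hc with hlt | heq
      · rw [(hgJ j hj).1 hlt]
        exact (hhJ j hj fun hm => hlt.ne (Finset.mem_filter.1 hm).2).2
      · rw [((hgJ j hj).2 heq.ge).1]
        exact hhI j (Finset.mem_filter.2 ⟨hj, heq⟩)
    · have h1 := (hgJ j hj).2 (by omega)
      rw [Homeomorph.trans_apply, Homeomorph.trans_apply, h1.1, h1.2]
      exact hhJ j hj fun hm => by have := (Finset.mem_filter.1 hm).2; omega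

/-- Near any point, at scale `1 / 4`, one of two subdivisions of the line into unit intervals, which
are shifted by `1 / 2` from each other, is not visible. -/
theorem exists_floor_eq (t : ℝ) :
    ∃ c : ℕ, c < 2 ∧ ∀ s, |s - t| < 1 / 4 → ⌊s + (c : ℝ) / 2⌋ = ⌊t + (c : ℝ) / 2⌋ := by
  have h0 := Int.floor_le t
  have h1 := Int.lt_floor_add_one t
  by_cases h : (⌊t⌋ : ℝ) + 1 / 4 ≤ t ∧ t ≤ ⌊t⌋ + 3 / 4
  · refine ⟨0, by norm_num, fun s hs => ?_⟩
    rw [abs_lt] at hs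
    simp only [Nat.cast_zero, zero_div, add_zero]
    rw [Int.floor_eq_iff]
    constructor <;> linarith
  · refine ⟨1, by norm_num, fun s hs => ?_⟩
    rw [abs_lt] at hs
    simp only [Nat.cast_one]
    by_cases h' : (⌊t⌋ : ℝ) + 1 / 4 ≤ t
    · have h2 : (⌊t⌋ : ℝ) + 3 / 4 < t := by
        by_contra hn
        exact h ⟨h', not_lt.1 hn⟩
      have e : ∀ u : ℝ, ⌊t⌋ + 1 / 2 ≤ u → u < ⌊t⌋ + 3 / 2 → ⌊u + 1 / 2⌋ = ⌊t⌋ + 1 := by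
        intro u h3 h4
        rw [Int.floor_eq_iff]
        push_cast
        constructor <;> linarith
      rw [e s (by linarith) (by linarith), e t (by linarith) (by linarith)]
    · have e : ∀ u : ℝ, ⌊t⌋ - 1 / 2 ≤ u → u < ⌊t⌋ + 1 / 2 → ⌊u + 1 / 2⌋ = ⌊t⌋ := by
        intro u h3 h4
        rw [Int.floor_eq_iff]
        constructor <;> linarith
      rw [e s (by linarith) (by linarith), e t (by linarith) (by linarith)]

/-- Four mutually shifted square tilings, such that every small disc lies in a tile of one of
them. -/
noncomputable def tile (δ : ℝ) (k : ℕ) (z : ℂ) : ℤ × ℤ :=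
  (⌊z.re / δ + ((k % 2 : ℕ) : ℝ) / 2⌋, ⌊z.im / δ + ((k / 2 : ℕ) : ℝ) / 2⌋)

theorem exists_tile_eq {δ : ℝ} (hδ : 0 < δ) (w : ℂ) :
    ∃ k < 4, ∀ z ∈ ball w (δ / 4), tile δ k z = tile δ k w := by
  obtain ⟨c, hc, h⟩ := exists_floor_eq (w.re / δ)
  obtain ⟨c', hc', h'⟩ := exists_floor_eq (w.im / δ)
  refine ⟨2 * c' + c, by omega, fun z hz => ?_⟩
  rw [mem_ball, dist_eq_norm] at hz
  have e1 : (2 * c' + c) % 2 = c := by omega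
  have e2 : (2 * c' + c) / 2 = c' := by omega
  have key : ∀ u v : ℝ, |u - v| ≤ ‖z - w‖ → |u / δ - v / δ| < 1 / 4 := by
    intro u v huv
    rw [← sub_div, abs_div, abs_of_pos hδ, div_lt_iff₀ hδ]
    linarith
  simp only [tile, e1, e2]
  rw [h _ (key _ _ (by rw [← Complex.sub_re]; exact Complex.abs_re_le_norm _)),
    h' _ (key _ _ (by rw [← Complex.sub_im]; exact Complex.abs_im_le_norm _))]

theorem dist_le_of_tile_eq {δ : ℝ} (hδ : 0 < δ) {k : ℕ} {z w : ℂ} (h : tile δ k z = tile δ k w) :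
    dist z w ≤ 2 * δ := by
  simp only [tile, Prod.mk.injEq] at h
  have key : ∀ u v c : ℝ, ⌊u / δ + c⌋ = ⌊v / δ + c⌋ → |u - v| ≤ δ := by
    intro u v c h
    have h1 := Int.abs_sub_lt_one_of_floor_eq_floor h
    rw [add_sub_add_right_eq_sub, ← sub_div, abs_div, abs_of_pos hδ, div_lt_one hδ] at h1
    exact h1.le
  have h1 := key _ _ _ h.1
  have h2 := key _ _ _ h.2
  rw [← Complex.sub_re] at h1
  rw [← Complex.sub_im] at h2
  rw [dist_eq_norm]
  linarith [Complex.norm_le_abs_re_add_abs_im (z - w)]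

/-- Finitely many points can be moved to finitely many close targets by a homeomorphism close to
the identity, however many points there are. -/
theorem exists_small_push {ε : ℝ} (hε : 0 < ε) :
    ∃ ρ > 0, ∀ (M : ℕ) (a b : ℕ → ℂ) (E : Set ℂ), InjOn a (Finset.range M) →
      InjOn b (Finset.range M) → (∀ i < M, dist (a i) (b i) < ρ) → E.Countable → IsClosed E →
      (∀ i < M, a i ∉ E) → (∀ i < M, b i ∉ E) →
      ∃ g : ℂ ≃ₜ ℂ, Adm g ∧ (∀ z, dist (g z) z ≤ ε) ∧ (∀ z ∈ E, g z = z) ∧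
        ∀ i < M, g (a i) = b i := by
  set δ : ℝ := ε / 16 with hδ'
  have hδ : 0 < δ := by positivity
  -- the case in which no target is also a source
  have key : ∀ (M : ℕ) (a b : ℕ → ℂ) (E : Set ℂ), InjOn a (Finset.range M) →
      InjOn b (Finset.range M) → (∀ i < M, ∀ j < M, a i ≠ b j) →
      (∀ i < M, dist (a i) (b i) < δ / 4) → E.Countable → IsClosed E →
      (∀ i < M, a i ∉ E) → (∀ i < M, b i ∉ E) →
      ∃ g : ℂ ≃ₜ ℂ, Adm g ∧ (∀ z, dist (g z) z ≤ 8 * δ) ∧ (∀ z ∈ E, g z = z) ∧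
        ∀ i < M, g (a i) = b i := by
    intro M a b E ha hb hab hd hEc hE haE hbE
    choose col hcol hcol' using fun i => exists_tile_eq hδ (a i)
    have hm : ∀ i, i ∈ Finset.range M → i < M := fun i hi => Finset.mem_range.1 hi
    obtain ⟨g, hg, hgd, hgE, hgJ⟩ := exists_push_in_tilings (tile δ)
      (fun k z w h => dist_le_of_tile_eq hδ h) ha hb
      (fun i hi j hj => hab i (hm i hi) j (hm j hj)) hEc hE (fun i hi => haE i (hm i hi))
      (fun i hi => hbE i (hm i hi)) (by positivity : 0 < δ / 4) (fun i hi => hd i (hm i hi)) col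
      (fun i _ => hcol' i) 4
    refine ⟨g, hg, fun z => (hgd z).trans (by push_cast; linarith), hgE, fun i hi =>
      (hgJ i (Finset.mem_range.2 hi)).1 (hcol i)⟩
  refine ⟨δ / 8, by positivity, fun M a b E ha hb hd hEc hE haE hbE => ?_⟩
  -- a generic small translation yields intermediate points
  set Y : Set ℂ := E ∪ range a ∪ range b with hY
  have hYc : Y.Countable := (hEc.union (countable_range _)).union (countable_range _)
  have hbad : (⋃ i, (fun t : ℂ => a i + t) ⁻¹' Y).Countable :=
    countable_iUnion fun i => hYc.preimage (add_right_injective (a i))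
  obtain ⟨t, ht, ht'⟩ := dense_compl_countable hbad (isOpen_ball (x := (0 : ℂ)) (ε := δ / 8))
    ⟨0, mem_ball_self (by positivity)⟩
  rw [mem_ball, dist_zero_right] at ht
  have hdY : ∀ i, a i + t ∉ Y := fun i h => ht' (mem_iUnion.2 ⟨i, h⟩)
  have hdE : ∀ i < M, a i + t ∉ E := fun i _ h => hdY i (Or.inl (Or.inl h))
  have hdinj : InjOn (fun i => a i + t) (Finset.range M) := fun i hi j hj h =>
    ha hi hj (add_right_cancel h)
  obtain ⟨g₁, hg₁, hd₁, hE₁, h₁⟩ := key M a (fun i => a i + t) E ha hdinj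
    (fun i _ j _ h => hdY j (Or.inl (Or.inr ⟨i, h⟩)))
    (fun i _ => by rw [dist_self_add_right]; linarith) hEc hE haE hdE
  obtain ⟨g₂, hg₂, hd₂, hE₂, h₂⟩ := key M (fun i => a i + t) b E hdinj hb
    (fun i _ j _ h => hdY i (Or.inr ⟨j, h.symm⟩))
    (fun i hi => by
      have h3 := dist_triangle (a i + t) (a i) (b i)
      have h4 := hd i hi
      rw [dist_self_add_left] at h3
      linarith) hEc hE hdE hbE
  refine ⟨g₁.trans g₂, hg₁.trans hg₂, fun z => ?_, fun z hz => ?_, fun i hi => ?_⟩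
  · rw [Homeomorph.trans_apply]
    have h3 := hd₁ z
    have h4 := hd₂ (g₁ z)
    have h5 := dist_triangle (g₂ (g₁ z)) (g₁ z) z
    linarith
  · rw [Homeomorph.trans_apply, hE₁ z hz, hE₂ z hz]
  · rw [Homeomorph.trans_apply, h₁ i hi]
    exact h₂ i hi

/-! ### Connecting orbits -/

/-- Admissible homeomorphisms are uniformly continuous. -/
theorem Adm.uniformContinuous {F : ℂ ≃ₜ ℂ} (hF : Adm F) : UniformContinuous F := by
  obtain ⟨R, hR⟩ := hF.2
  have hs : HasCompactSupport fun z => F z - z := by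
    refine HasCompactSupport.intro (isCompact_closedBall (0 : ℂ) R) fun z hz => ?_
    rw [mem_closedBall, dist_zero_right, not_le] at hz
    rw [hR z hz.le, sub_self]
  have hu : UniformContinuous fun z => F z - z :=
    hs.uniformContinuous_of_continuous (F.continuous.sub continuous_id)
  have := hu.add uniformContinuous_id
  refine this.congr ?_
  simp

/-- An admissible homeomorphism has no proper absorbing set: for a large disc `D` mapped to itself,
the image of `A ∩ D` would be a subset of `A ∩ D` of the same finite area which misses a
nonempty open part of it. -/
theorem eq_univ_of_absorbing {F : ℂ ≃ₜ ℂ} (hF : Adm F) {A : Set ℂ} (hA : IsOpen A)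
    (hne : A.Nonempty) {ρ : ℝ} (hρ : 0 < ρ) (h : ∀ y ∈ A, ball (F y) ρ ⊆ A) : A = univ := by
  by_contra hcon
  obtain ⟨y, hy⟩ := nonempty_frontier_iff.2 ⟨hne, hcon⟩
  have hyA : y ∉ A := by
    rw [hA.frontier_eq] at hy
    exact hy.2
  have hyc : y ∈ closure A := frontier_subset_closure hy
  obtain ⟨R, hR⟩ := hF.2
  set D : Set ℂ := ball 0 (max R (‖y‖ + ρ)) with hD
  have hFD : ∀ z ∈ D, F z ∈ D := by
    intro z hz
    by_contra hn
    have h1 : R ≤ ‖F z‖ := by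
      rw [hD, mem_ball, dist_zero_right, not_lt] at hn
      exact (le_max_left _ _).trans hn
    exact hn (by rwa [F.injective (hR _ h1)])
  have hyD : ball y ρ ⊆ D := by
    intro z hz
    rw [mem_ball, dist_eq_norm] at hz
    rw [hD, mem_ball, dist_zero_right]
    have := norm_sub_norm_le z y
    exact lt_of_lt_of_le (by linarith) (le_max_right _ _)
  have hAD : IsOpen (A ∩ D) := hA.inter isOpen_ball
  have hsub : F '' (A ∩ D) ∪ (A ∩ ball y ρ) ⊆ A ∩ D := by
    rintro z (⟨w, hw, rfl⟩ | hz)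
    · exact ⟨h w hw.1 (mem_ball_self hρ), hFD w hw.2⟩
    · exact ⟨hz.1, hyD hz.2⟩
  have hdisj : Disjoint (F '' (A ∩ D)) (A ∩ ball y ρ) := by
    rw [disjoint_left]
    rintro z ⟨w, hw, rfl⟩ hz
    exact hyA (h w hw.1 (by rw [mem_ball, dist_comm]; exact hz.2))
  have hvol : volume (F '' (A ∩ D)) = volume (A ∩ D) := by
    rw [F.image_eq_preimage_symm]
    exact hF.1.symm _ hAD
  have hfin : volume (A ∩ D) ≠ ⊤ :=
    ((measure_mono inter_subset_right).trans_lt measure_ball_lt_top).ne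
  have hpos : volume (A ∩ ball y ρ) ≠ 0 := by
    obtain ⟨z, hz, hz'⟩ := mem_closure_iff.1 hyc _ isOpen_ball (mem_ball_self hρ)
    exact ((hA.inter isOpen_ball).measure_pos _ ⟨z, hz', hz⟩).ne'
  have hle := measure_mono (μ := volume) hsub
  rw [measure_union hdisj (hA.inter isOpen_ball).measurableSet, hvol] at hle
  exact hpos (nonpos_iff_eq_zero.1 ((ENNReal.add_le_add_iff_left hfin).1 (by simpa using hle)))

/-- Any two points are joined by a `ρ`-pseudo-orbit without repetitions whose intermediate points
avoid a countable set. -/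
theorem exists_chain {F : ℂ ≃ₜ ℂ} (hF : Adm F) {u w : ℂ} (huw : u ≠ w) {Z : Set ℂ}
    (hZ : Z.Countable) {ρ : ℝ} (hρ : 0 < ρ) :
    ∃ (M : ℕ) (y : ℕ → ℂ), 0 < M ∧ y 0 = u ∧ y M = w ∧
      (∀ i < M, dist (F (y i)) (y (i + 1)) < ρ) ∧ (∀ i, 0 < i → i < M → y i ∉ Z) ∧
      InjOn y (Iic M) := by
  classical
  -- enlarging `Z` keeps intermediate points away from both ends
  set W : Set ℂ := Z ∪ {u, w} with hW
  have hWc : W.Countable := hZ.union (by simp)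
  set P : ℕ → (ℕ → ℂ) → Prop := fun M y => y 0 = u ∧
    (∀ i < M, dist (F (y i)) (y (i + 1)) < ρ) ∧ (∀ i, 0 < i → i ≤ M → y i ∉ W) ∧
    InjOn y (Iic M) with hP
  have hext : ∀ M y v, P M y → dist (F (y M)) v < ρ → (∀ i ≤ M, y i ≠ v) →
      ∃ y', (∀ i ≤ M, y' i = y i) ∧ y' (M + 1) = v ∧ y' 0 = u ∧
        (∀ i < M + 1, dist (F (y' i)) (y' (i + 1)) < ρ) ∧ (∀ i, 0 < i → i ≤ M → y' i ∉ W) ∧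
        InjOn y' (Iic (M + 1)) := by
    rintro M y v ⟨h0, hd, hy, hi⟩ hv hne
    have e : ∀ i ≤ M, Function.update y (M + 1) v i = y i := fun i hi =>
      Function.update_of_ne (by omega) _ _
    have e' : Function.update y (M + 1) v (M + 1) = v := Function.update_self _ _ _
    refine ⟨Function.update y (M + 1) v, e, e', by rw [e 0 (Nat.zero_le _), h0],
      fun i hi => ?_, fun i h1 h2 => by rw [e i h2]; exact hy i h1 h2, ?_⟩
    · rcases Nat.lt_succ_iff_lt_or_eq.1 hi with hlt | rfl
      · rw [e i hlt.le, e (i + 1) hlt]; exact hd i hlt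
      · rw [e i le_rfl, e']; exact hv
    · intro i hi' j hj' hij
      rcases Nat.le_succ_iff.1 hi' with h1 | h1 <;> rcases Nat.le_succ_iff.1 hj' with h2 | h2
      · rw [e i h1, e j h2] at hij
        exact hi h1 h2 hij
      · subst h2
        rw [e i h1, e'] at hij
        exact absurd hij (hne i h1)
      · subst h1
        rw [e j h2, e'] at hij
        exact absurd hij.symm (hne j h2)
      · rw [h1, h2]
  set A : Set ℂ := {v | ∃ M y, P M y ∧ dist (F (y M)) v < ρ} with hA
  have hAo : IsOpen A := by
    have : A = ⋃ (M) (y) (_ : P M y), ball (F (y M)) ρ := by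
      ext v
      simp only [hA, mem_ofPred_eq, mem_iUnion, mem_ball, exists_prop]
      simp only [dist_comm]
    rw [this]
    exact isOpen_iUnion fun _ => isOpen_iUnion fun _ => isOpen_iUnion fun _ => isOpen_ball
  have hAne : A.Nonempty := ⟨F u, 0, fun _ => u, ⟨rfl, by simp, fun i h1 h2 => by omega,
    fun i hi j hj _ => by simp only [mem_Iic] at hi hj; omega⟩, by simpa using hρ⟩
  have hAu : A = univ := by
    refine eq_univ_of_absorbing hF hAo hAne hρ ?_
    rintro v ⟨M, y, hy, hv⟩ v' hv'
    rw [mem_ball, dist_comm] at hv'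
    -- move `v` to a generic nearby point
    obtain ⟨v₁, ⟨h1, h2⟩, h3⟩ := dense_compl_countable
      (hWc.union ((finite_Iic M).image y).countable)
      ((isOpen_lt (continuous_const.dist continuous_id) continuous_const).inter
        (isOpen_lt (F.continuous.dist continuous_const) continuous_const) :
        IsOpen ({z | dist (F (y M)) z < ρ} ∩ {z | dist (F z) v' < ρ})) ⟨v, hv, hv'⟩
    obtain ⟨y', _, e1, e2, e3, e4, e5⟩ := hext M y v₁ hy h1 fun i hi e =>
      h3 (Or.inr ⟨i, hi, e⟩)
    refine ⟨M + 1, y', ⟨e2, e3, fun i hi hi' => ?_, e5⟩, by rw [e1]; exact h2⟩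
    rcases Nat.le_succ_iff.1 hi' with h4 | h4
    · exact e4 i hi h4
    · rw [h4, e1]
      exact fun h5 => h3 (Or.inl h5)
  obtain ⟨M, y, hy, hv⟩ : w ∈ A := hAu ▸ mem_univ w
  obtain ⟨y', _, e1, e2, e3, e4, e5⟩ := hext M y w hy hv fun i hi e => by
    rcases Nat.eq_zero_or_pos i with rfl | h0
    · exact huw (hy.1.symm.trans e)
    · exact hy.2.2.1 i h0 hi (by rw [e, hW]; simp)
  exact ⟨M + 1, y', Nat.succ_pos _, e2, e1, e3,
    fun i h0 hi h => e4 i h0 (Nat.lt_succ_iff.1 hi) (Or.inl h), e5⟩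

/-- A small perturbation creates an orbit segment from `u` to `w`, without changing `F` on the
closed countable set `B`. -/
theorem exists_connection {F : ℂ ≃ₜ ℂ} (hF : Adm F) {B : Set ℂ} (hBc : B.Countable)
    (hB : IsClosed B) {u w : ℂ} (hu : u ∉ B) (hw : w ∉ F '' B) (huw : u ≠ w) {Z : Set ℂ}
    (hZ : Z.Countable) {ε : ℝ} (hε : 0 < ε) :
    ∃ (F' : ℂ ≃ₜ ℂ) (M : ℕ) (y : ℕ → ℂ), Adm F' ∧ Near ε F' F ∧ (∀ z ∈ B, F' z = F z) ∧
      0 < M ∧ y 0 = u ∧ y M = w ∧ (∀ i < M, F' (y i) = y (i + 1)) ∧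
      (∀ i, 0 < i → i < M → y i ∉ Z) ∧ InjOn y (Iic M) := by
  obtain ⟨η, hη, hη'⟩ := Metric.uniformContinuous_iff.1 hF.symm.uniformContinuous ε hε
  obtain ⟨ρ, hρ, hpush⟩ := exists_small_push (lt_min hε (half_pos hη))
  have hEc : (F '' B).Countable := hBc.image _
  obtain ⟨M, y, hM, h0, hyM, hd, hyZ, hinj⟩ := exists_chain hF huw ((hZ.union hBc).union hEc) hρ
  obtain ⟨g, hg, hgd, hgE, hgy⟩ := hpush M (fun i => F (y i)) (fun i => y (i + 1)) (F '' B)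
    (fun i hi j hj h => hinj (Finset.mem_range.1 hi).le (Finset.mem_range.1 hj).le
      (F.injective h))
    (fun i hi j hj h => by
      have := hinj (Finset.mem_range.1 hi) (Finset.mem_range.1 hj) h
      omega)
    hd hEc (F.isClosedMap B hB)
    (fun i hi => by
      rintro ⟨z, hz, e⟩
      rw [F.injective e] at hz
      rcases Nat.eq_zero_or_pos i with rfl | h
      · exact hu (h0 ▸ hz)
      · exact hyZ i h hi (Or.inl (Or.inr hz)))
    (fun i hi h => by
      rcases Nat.lt_or_eq_of_le (Nat.succ_le_of_lt hi) with h' | h'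
      · exact hyZ (i + 1) (Nat.succ_pos i) h' (Or.inr h)
      · exact hw (by rw [← hyM, ← h']; exact h))
  refine ⟨F.trans g, M, y, hF.trans hg, fun z => ⟨?_, ?_⟩, fun z hz => ?_, hM, h0, hyM,
    fun i hi => ?_, fun i h hi hz => hyZ i h hi (Or.inl (Or.inl hz)), hinj⟩
  · exact (hgd (F z)).trans (min_le_left _ _)
  · refine (hη' ?_).le
    have := (hgd (g.symm z)).trans (min_le_right _ _)
    rw [Homeomorph.apply_symm_apply, dist_comm] at this
    exact this.trans_lt (half_lt_self hη)
  · exact hgE _ (mem_image_of_mem _ hz)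
  · exact hgy i hi

/-! ### Controlling the orbit of one more point -/

theorem isClosed_union_range {S : Set ℂ} (hS : IsClosed S) {x : ℂ} (hx : x ∈ S) {o : ℕ → ℂ}
    (ho : Tendsto o atTop (𝓝 x)) : IsClosed (S ∪ range o) := by
  have : S ∪ range o = S ∪ insert x (range o) := by
    rw [union_insert, insert_eq_of_mem (show x ∈ S ∪ range o from Or.inl hx)]
  rw [this]
  exact hS.union ho.isCompact_insert_range.isClosed

/-- An orbit segment from `v` to the start of a convergent orbit makes the orbit of `v` converge. -/
theorem iterate_of_chain {f : ℂ → ℂ} {y o : ℕ → ℂ} {N : ℕ} {v x : ℂ} {Z : Set ℂ} (hv : y 0 = v)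
    (hy : ∀ i < N, f (y i) = y (i + 1)) (hN : y N = o 0) (ho : ∀ m, f (o m) = o (m + 1))
    (hx : Tendsto o atTop (𝓝 x)) (hyZ : ∀ i, 0 < i → i < N → y i ∉ Z) (hoZ : ∀ m, o m ∉ Z) :
    Tendsto (fun n => f^[n] v) atTop (𝓝 x) ∧ ∀ n > 0, f^[n] v ∉ Z := by
  have h1 : ∀ i ≤ N, f^[i] v = y i := by
    intro i
    induction i with
    | zero => intro _; exact hv.symm
    | succ i ih =>
      intro hi
      rw [Function.iterate_succ_apply', ih (by omega), hy i hi]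
  have h2 : ∀ m, f^[m + N] v = o m := by
    intro m
    induction m with
    | zero => rw [Nat.zero_add, h1 N le_rfl, hN]
    | succ m ih => rw [Nat.add_right_comm, Function.iterate_succ_apply', ih, ho]
  refine ⟨(tendsto_add_atTop_iff_nat N).1 ?_, fun n hn => ?_⟩
  · simpa only [h2] using hx
  · rcases lt_or_ge n N with h | h
    · rw [h1 n h.le]; exact hyZ n hn h
    · obtain ⟨m, rfl⟩ := Nat.exists_eq_add_of_le' h
      rw [h2]; exact hoZ m

/-- By a small perturbation outside the invariant set `S`, the forward orbit of `v` is made to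
converge to `x1` and the backward orbit to `x2`, both avoiding `Z`: a forward orbit is landed at
`x1`, a backward one at `x2`, and the two are connected through `v`. -/
theorem exists_orbit {F : ℂ ≃ₜ ℂ} (hF : Adm F) {S : Set ℂ} (hSc : S.Countable) (hS : IsClosed S)
    (hFS : ∀ z, F z ∈ S ↔ z ∈ S) {x1 x2 : ℂ} (hx1 : x1 ∈ S) (hx2 : x2 ∈ S) (hF1 : F x1 = x1)
    (hF2 : F x2 = x2) {v : ℂ} (hv : v ∉ S) {Z : Set ℂ} (hZ : Z.Countable) {ε : ℝ} (hε : 0 < ε) :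
    ∃ F' : ℂ ≃ₜ ℂ, Adm F' ∧ Near ε F' F ∧ (∀ z ∈ S, F' z = F z) ∧
      (Tendsto (fun n => F'^[n] v) atTop (𝓝 x1) ∧ ∀ n > 0, F'^[n] v ∉ Z) ∧
      Tendsto (fun n => F'.symm^[n] v) atTop (𝓝 x2) ∧ ∀ n > 0, F'.symm^[n] v ∉ Z := by
  have hε4 : 0 < ε / 4 := by linarith
  have hvc : ({v} : Set ℂ).Countable := countable_singleton v
  -- a forward orbit converging to `x1`
  obtain ⟨F₁, o₁, hF₁, hn₁, hS₁, hi₁, hZ₁, ht₁, ho₁⟩ :=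
    exists_landing hF hF1 hSc hS hx1 ((hZ.union hSc).union hvc) hε4
  have ho₁S : ∀ m, o₁ m ∉ S := fun m h => hZ₁ m (Or.inl (Or.inr h))
  have ho₁v : ∀ m, o₁ m ≠ v := fun m h => hZ₁ m (Or.inr h)
  set T : Set ℂ := S ∪ range o₁ with hT
  have hTc : T.Countable := hSc.union (countable_range _)
  have hTcl : IsClosed T := isClosed_union_range hS hx1 ht₁
  have hvT : v ∉ T := by
    rintro (h | ⟨m, h⟩)
    exacts [hv h, ho₁v m h]
  have hTF₁ : ∀ t ∈ T, F₁ t ∈ T ∧ F₁ t ≠ o₁ 0 := by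
    rintro t (h | ⟨m, rfl⟩)
    · rw [hS₁ t h]
      have := (hFS t).2 h
      exact ⟨Or.inl this, fun e => ho₁S 0 (e ▸ this)⟩
    · rw [ho₁]
      exact ⟨Or.inr ⟨_, rfl⟩, fun e => absurd (hi₁ e) (Nat.succ_ne_zero m)⟩
  -- a backward orbit converging to `x2`
  have hx2' : F₁.symm x2 = x2 := fix_symm (by rw [hS₁ x2 hx2, hF2])
  obtain ⟨G, o₂, hG, hn₂, hS₂, hi₂, hZ₂, ht₂, ho₂⟩ :=
    exists_landing hF₁.symm hx2' (hTc.image F₁) (F₁.isClosedMap T hTcl)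
      ⟨x2, Or.inl hx2, by rw [hS₁ x2 hx2, hF2]⟩ ((hZ.union hTc).union hvc) hε4
  set F₂ : ℂ ≃ₜ ℂ := G.symm with hF₂
  have hF₂T : ∀ t ∈ T, F₂ t = F₁ t := fun t ht => by
    rw [hF₂, G.symm_apply_eq, hS₂ _ (mem_image_of_mem _ ht), Homeomorph.symm_apply_apply]
  have ho₂T : ∀ m, o₂ m ∉ T := fun m h => hZ₂ m (Or.inl (Or.inr h))
  have ho₂v : ∀ m, o₂ m ≠ v := fun m h => hZ₂ m (Or.inr h)
  have hF₂o : ∀ m, F₂ (o₂ (m + 1)) = o₂ m := fun m => by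
    rw [hF₂, G.symm_apply_eq, ho₂]
  -- the backward orbit is connected to `v`
  set B₃ : Set ℂ := T ∪ range (fun m => o₂ (m + 1)) with hB₃
  have hB₃c : B₃.Countable := hTc.union (countable_range _)
  have hB₃cl : IsClosed B₃ :=
    isClosed_union_range hTcl (Or.inl hx2) ((tendsto_add_atTop_iff_nat 1).2 ht₂)
  obtain ⟨F₃, M, y, hF₃, hn₃, hS₃, hM, hy0, hyM, hy, hyZ, hyi⟩ :=
    exists_connection (F := F₂) hG.symm hB₃c hB₃cl (u := o₂ 0) (w := v)
      (by
        rintro (h | ⟨m, h⟩)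
        · exact ho₂T 0 h
        · exact absurd (hi₂ h) (Nat.succ_ne_zero m))
      (by
        rintro ⟨t, h | ⟨m, rfl⟩, e⟩
        · rw [hF₂T t h] at e
          exact hvT (e ▸ (hTF₁ t h).1)
        · exact ho₂v m ((hF₂o m).symm.trans e))
      (ho₂v 0) (hZ.union hTc) hε4
  have hF₃T : ∀ t ∈ T, F₃ t = F₁ t := fun t ht => (hS₃ t (Or.inl ht)).trans (hF₂T t ht)
  have hF₃o : ∀ m, F₃ (o₂ (m + 1)) = o₂ m := fun m => (hS₃ _ (Or.inr ⟨m, rfl⟩)).trans (hF₂o m)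
  -- and `v` is connected to the forward orbit
  set B₄ : Set ℂ := B₃ ∪ y '' Iio M with hB₄
  have hyf : (y '' Iio M).Finite := (finite_Iio M).image y
  obtain ⟨F₄, N, y', hF₄, hn₄, hS₄, hN, hy0', hyN', hy', hyZ', -⟩ :=
    exists_connection hF₃ (hB₃c.union hyf.countable) (hB₃cl.union hyf.isClosed) (u := v)
      (w := o₁ 0)
      (by
        rintro ((h | ⟨m, h⟩) | ⟨i, hi, h⟩)
        · exact hvT h
        · exact ho₂v _ h
        · exact (mem_Iio.1 hi).ne (hyi (mem_Iio.1 hi).le (mem_Iic.2 le_rfl) (h.trans hyM.symm)))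
      (by
        rintro ⟨t, (h | ⟨m, rfl⟩) | ⟨i, hi, rfl⟩, e⟩
        · rw [hF₃T t h] at e
          exact (hTF₁ t h).2 e
        · exact ho₂T m (((hF₃o m).symm.trans e) ▸ Or.inr ⟨0, rfl⟩)
        · rw [hy i hi] at e
          rcases Nat.lt_or_eq_of_le (Nat.succ_le_of_lt (mem_Iio.1 hi)) with h | h
          · exact hyZ _ (Nat.succ_pos i) h (Or.inr (e ▸ Or.inr ⟨0, rfl⟩))
          · exact ho₁v 0 (by rw [← e, ← hyM, ← h]))
      (ho₁v 0).symm hZ hε4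
  have hF₄T : ∀ t ∈ T, F₄ t = F₁ t := fun t ht =>
    (hS₄ t (Or.inl (Or.inl ht))).trans (hF₃T t ht)
  have hn₂' : Near (ε / 4) F₂ F₁ := hn₂.symm
  refine ⟨F₄, hF₄, (((hn₄.trans hn₃).trans hn₂').trans hn₁).mono (by linarith),
    fun z hz => (hF₄T z (Or.inl hz)).trans (hS₁ z hz), ?_, ?_⟩
  · exact iterate_of_chain hy0' hy' hyN' (fun m => (hF₄T _ (Or.inr ⟨m, rfl⟩)).trans (ho₁ m)) ht₁
      hyZ' fun m h => hZ₁ m (Or.inl (Or.inl h))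
  · refine iterate_of_chain (y := fun i => y (M - i)) (o := o₂) (N := M) (by simpa using hyM)
      (fun i hi => ?_) (by simpa using hy0) (fun m => ?_) ht₂ (fun i h0 hi h => ?_)
      fun m h => hZ₂ m (Or.inl (Or.inl h))
    · rw [F₄.symm_apply_eq, hS₄ _ (Or.inr ⟨M - (i + 1), mem_Iio.2 (by omega), rfl⟩),
        hy _ (by omega)]
      congr 1
      omega
    · rw [F₄.symm_apply_eq, hS₄ _ (Or.inl (Or.inr ⟨m, rfl⟩)), hF₃o]
    · exact hyZ (M - i) (by omega) (by omega) (Or.inl h)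

/-! ### The limit homeomorphism -/

theorem iterate_congr {f g : ℂ → ℂ} {S : Set ℂ} (hfg : ∀ z ∈ S, f z = g z)
    (hg : ∀ z ∈ S, g z ∈ S) (n : ℕ) : ∀ z ∈ S, f^[n] z = g^[n] z := by
  induction n with
  | zero => intro z _; rfl
  | succ n ih =>
    intro z hz
    rw [Function.iterate_succ_apply, Function.iterate_succ_apply, hfg z hz, ih _ (hg z hz)]

theorem symm_congr {F G : ℂ ≃ₜ ℂ} {S : Set ℂ} (h : ∀ z ∈ S, F z = G z)
    (hG : ∀ z, G z ∈ S ↔ z ∈ S) : ∀ z ∈ S, F.symm z = G.symm z := by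
  intro z hz
  rw [F.symm_apply_eq, h _ ((hG _).1 (by rwa [Homeomorph.apply_symm_apply])),
    Homeomorph.apply_symm_apply]

/-- The orbits of `v` under `F` and `F⁻¹` converge to `x1` and `x2`. -/
def Conv (F : ℂ ≃ₜ ℂ) (v x1 x2 : ℂ) : Prop :=
  Tendsto (fun n => F^[n] v) atTop (𝓝 x1) ∧ Tendsto (fun n => F.symm^[n] v) atTop (𝓝 x2)

theorem Conv.congr {F G : ℂ ≃ₜ ℂ} {S : Set ℂ} (h : ∀ z ∈ S, F z = G z)
    (hG : ∀ z, G z ∈ S ↔ z ∈ S) {v x1 x2 : ℂ} (hv : v ∈ S) (hc : Conv G v x1 x2) :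
    Conv F v x1 x2 := by
  refine ⟨hc.1.congr fun n => ?_, hc.2.congr fun n => ?_⟩
  · exact (iterate_congr h (fun z hz => (hG z).2 hz) n v hv).symm
  · exact (iterate_congr (symm_congr h hG)
      (fun z hz => (hG _).1 (by rwa [Homeomorph.apply_symm_apply])) n v hv).symm

/-- The state of the construction after `k` steps: the homeomorphism `F`, and a closed countable
invariant set `S` on which `F` is final. It contains the prescribed limit points and the orbits of
the first `k` points, and no other point of the enumeration `e`. -/
def Stage (x1 x2 e : ℕ → ℂ) (l : ℕ → ℕ) (k : ℕ) (F : ℂ ≃ₜ ℂ) (S : Set ℂ) : Prop :=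
  Adm F ∧ S.Countable ∧ IsClosed S ∧ (∀ z, F z ∈ S ↔ z ∈ S) ∧
    (∀ n, x1 n ∈ S ∧ x2 n ∈ S ∧ F (x1 n) = x1 n ∧ F (x2 n) = x2 n) ∧
    (∀ i, e i ∈ S → ∃ j < k, e j = e i) ∧ ∀ j < k, e j ∈ S ∧ Conv F (e j) (x1 (l j)) (x2 (l j))

theorem Stage.step {x1 x2 e : ℕ → ℂ} {l : ℕ → ℕ} (hl : ∀ i j, e i = e j → l i = l j) {k : ℕ}
    {F : ℂ ≃ₜ ℂ} {S : Set ℂ} (h : Stage x1 x2 e l k F S) {ε : ℝ} (hε : 0 < ε) :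
    ∃ F' S', Stage x1 x2 e l (k + 1) F' S' ∧ Near ε F' F ∧ S ⊆ S' ∧ ∀ z ∈ S, F' z = F z := by
  obtain ⟨hF, hSc, hS, hFS, hx, he, hc⟩ := h
  by_cases hk : e k ∈ S
  · -- the `k`-th point is a repetition
    refine ⟨F, S, ⟨hF, hSc, hS, hFS, hx, fun i hi => ?_, fun j hj => ?_⟩,
      fun z => by simp [hε.le], Subset.rfl, fun _ _ => rfl⟩
    · obtain ⟨j, hj, e⟩ := he i hi
      exact ⟨j, by omega, e⟩
    · rcases Nat.lt_succ_iff_lt_or_eq.1 hj with h | rfl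
      · exact hc j h
      · obtain ⟨i, hi, hij⟩ := he j hk
        have := hc i hi
        rw [hij, hl i j hij] at this
        exact this
  · obtain ⟨hx1, hx2, hF1, hF2⟩ := hx (l k)
    obtain ⟨F', hF', hn, hS', ⟨ht1, hZ1⟩, ht2, hZ2⟩ := exists_orbit hF hSc hS hFS hx1 hx2 hF1 hF2 hk
      (countable_range e) hε
    have hinv : ∀ z ∈ S, F'.symm z ∈ S := fun z hz => by
      rw [symm_congr hS' hFS z hz]
      exact (hFS _).1 (by rwa [Homeomorph.apply_symm_apply])
    set S' : Set ℂ := S ∪ range (fun n => F'^[n] (e k)) ∪ range (fun n => F'.symm^[n] (e k))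
      with hS'd
    have hfw : ∀ z ∈ S', F' z ∈ S' := by
      rintro z ((hz | ⟨n, rfl⟩) | ⟨n, rfl⟩)
      · rw [hS' z hz]
        exact Or.inl (Or.inl ((hFS z).2 hz))
      · exact Or.inl (Or.inr ⟨n + 1, Function.iterate_succ_apply' _ _ _⟩)
      · cases n with
        | zero => exact Or.inl (Or.inr ⟨1, rfl⟩)
        | succ n =>
          refine Or.inr ⟨n, ?_⟩
          simp only [Function.iterate_succ_apply', Homeomorph.apply_symm_apply]
    have hbw : ∀ z ∈ S', F'.symm z ∈ S' := by
      rintro z ((hz | ⟨n, rfl⟩) | ⟨n, rfl⟩)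
      · exact Or.inl (Or.inl (hinv z hz))
      · cases n with
        | zero => exact Or.inr ⟨1, rfl⟩
        | succ n =>
          refine Or.inl (Or.inr ⟨n, ?_⟩)
          simp only [Function.iterate_succ_apply', Homeomorph.symm_apply_apply]
      · exact Or.inr ⟨n + 1, Function.iterate_succ_apply' _ _ _⟩
    refine ⟨F', S', ⟨hF', (hSc.union (countable_range _)).union (countable_range _),
      isClosed_union_range (isClosed_union_range hS hx1 ht1) (Or.inl hx2) ht2,
      fun z => ⟨fun hz => ?_, hfw z⟩, fun n => ?_, fun i hi => ?_, fun j hj => ?_⟩, hn,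
      fun z hz => Or.inl (Or.inl hz), hS'⟩
    · simpa using hbw _ hz
    · obtain ⟨h1, h2, h3, h4⟩ := hx n
      exact ⟨Or.inl (Or.inl h1), Or.inl (Or.inl h2), by rw [hS' _ h1, h3], by rw [hS' _ h2, h4]⟩
    · rcases hi with (hi | ⟨n, hn⟩) | ⟨n, hn⟩
      · obtain ⟨j, hj, e⟩ := he i hi
        exact ⟨j, by omega, e⟩
      · rcases Nat.eq_zero_or_pos n with rfl | h0
        · exact ⟨k, by omega, hn⟩
        · exact absurd ⟨i, hn.symm⟩ (hZ1 n h0)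
      · rcases Nat.eq_zero_or_pos n with rfl | h0
        · exact ⟨k, by omega, hn⟩
        · exact absurd ⟨i, hn.symm⟩ (hZ2 n h0)
    · rcases Nat.lt_succ_iff_lt_or_eq.1 hj with h | rfl
      · exact ⟨Or.inl (Or.inl (hc j h).1), (hc j h).2.congr hS' hFS (hc j h).1⟩
      · exact ⟨Or.inl (Or.inr ⟨0, rfl⟩), ht1, ht2⟩

/-- Countably many points can be given prescribed limits simultaneously. -/
theorem exists_conv {x1 x2 e : ℕ → ℂ} {l : ℕ → ℕ} (hl : ∀ i j, e i = e j → l i = l j)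
    (hX : IsClosed (range x1 ∪ range x2)) (he : ∀ i, e i ∉ range x1 ∪ range x2) :
    ∃ F : ℂ ≃ₜ ℂ, ∀ i, Conv F (e i) (x1 (l i)) (x2 (l i)) := by
  have h0 : Stage x1 x2 e l 0 (Homeomorph.refl ℂ) (range x1 ∪ range x2) :=
    ⟨Adm.refl, (countable_range _).union (countable_range _), hX, fun _ => Iff.rfl,
      fun n => ⟨Or.inl ⟨n, rfl⟩, Or.inr ⟨n, rfl⟩, rfl, rfl⟩, fun i hi => absurd hi (he i),
      fun j hj => absurd hj (Nat.not_lt_zero j)⟩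
  have hstep : ∀ k (p : {p : (ℂ ≃ₜ ℂ) × Set ℂ // Stage x1 x2 e l k p.1 p.2}),
      ∃ q : (ℂ ≃ₜ ℂ) × Set ℂ, Stage x1 x2 e l (k + 1) q.1 q.2 ∧ Near (1 * (1 / 2) ^ k) q.1 p.1.1 ∧
        p.1.2 ⊆ q.2 ∧ ∀ z ∈ p.1.2, q.1 z = p.1.1 z := fun k p => by
    obtain ⟨F', S', h⟩ := p.2.step hl (by positivity : (0 : ℝ) < 1 * (1 / 2) ^ k)
    exact ⟨(F', S'), h⟩
  choose nx hnx hnear hsub hagree using hstep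
  let s : ∀ k, {p : (ℂ ≃ₜ ℂ) × Set ℂ // Stage x1 x2 e l k p.1 p.2} := fun k =>
    Nat.rec ⟨(Homeomorph.refl ℂ, range x1 ∪ range x2), h0⟩ (fun k p => ⟨nx k p, hnx k p⟩) k
  let G : ℕ → ℂ ≃ₜ ℂ := fun k => (s k).1.1
  let S : ℕ → Set ℂ := fun k => (s k).1.2
  have hstage : ∀ k, Stage x1 x2 e l k (G k) (S k) := fun k => (s k).2
  have hG : ∀ k, Near (1 * (1 / 2) ^ k) (G (k + 1)) (G k) := fun k => hnear k (s k)
  have hGS : ∀ k, ∀ z ∈ S k, G (k + 1) z = G k z := fun k => hagree k (s k)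
  have hSmono : Monotone S := monotone_nat_of_le_succ fun k => hsub k (s k)
  have hGS' : ∀ k n, k ≤ n → ∀ z ∈ S k, G n z = G k z := by
    intro k n hkn z hz
    induction n, hkn using Nat.le_induction with
    | base => rfl
    | succ n hn ih => rw [hGS n z (hSmono hn hz), ih]
  obtain ⟨F, hF, -⟩ := exists_limit hG
  have hFS : ∀ k, ∀ z ∈ S k, F z = G k z := fun k z hz =>
    tendsto_nhds_unique (hF z) (tendsto_const_nhds.congr' (by
      filter_upwards [eventually_ge_atTop k] with n hn
      rw [hGS' k n hn z hz]))
  refine ⟨F, fun i => ?_⟩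
  obtain ⟨-, -, -, hinv, -, -, hc⟩ := hstage (i + 1)
  obtain ⟨h1, h2⟩ := hc i (Nat.lt_succ_self i)
  exact h2.congr (hFS (i + 1)) hinv h1

end Wada

/-- The ω-limit set of a convergent orbit consists of the limit. -/
theorem omegaLimitSet_eq_singleton {X : Type*} [TopologicalSpace X] [T2Space X] {f : X → X}
    {x y : X} (h : Filter.Tendsto (fun n => f^[n] x) Filter.atTop (nhds y)) :
    omegaLimitSet f x = {y} := by
  ext z
  rw [Set.mem_singleton_iff]
  constructor
  · rintro ⟨φ, hφ, -, hz⟩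
    exact tendsto_nhds_unique hz (h.comp hφ.tendsto_atTop)
  · rintro rfl
    exact ⟨fun i => i + 1, fun i j hij => Nat.add_lt_add_right hij 1, fun i => Nat.succ_pos i,
      (Filter.tendsto_add_atTop_iff_nat 1).2 h⟩

/-- A sequence in the plane whose second coordinate leaves every compact set has closed range. -/
theorem isClosed_range_of_tendsto_snd {x : ℕ → ℝ × ℝ}
    (h : Filter.Tendsto (fun n => (x n).2) Filter.atTop (Filter.cocompact ℝ)) :
    IsClosed (Set.range x) := by
  have h1 : Filter.Tendsto x (Filter.cocompact ℕ) (Filter.cocompact (ℝ × ℝ)) := by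
    rw [Filter.cocompact_eq_cofinite, Nat.cofinite_eq_atTop]
    exact (Filter.tendsto_comap_iff.2 h).mono_right (Filter.comap_cocompact_le continuous_snd)
  have h2 := isProperMap_iff_tendsto_cocompact.2 ⟨continuous_of_discreteTopology, h1⟩
  exact h2.isClosedMap.isClosed_range

theorem stmt11 (x1 x2 : ℕ → ℝ × ℝ)
    -- the points x_{n1}, x_{n2} are pairwise distinct
    (hx1inj : Function.Injective x1) (hx2inj : Function.Injective x2)
    (hx12 : ∀ m n : ℕ, x1 m ≠ x2 n)
    (V : ℕ → Set (ℝ × ℝ))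
    (hVdisj : ∀ m n : ℕ, m ≠ n → Disjoint (V m) (V n))
    (hVcount : ∀ n, (V n).Countable)
    (hVsub : ∀ n, V n ⊆ (Set.range x1 ∪ Set.range x2)ᶜ)
    (hVdense : ∀ n, Dense (V n))
    -- (1) q(x_{n1}) → +∞ and q(x_{n2}) → -∞
    (h1 : Filter.Tendsto (fun n => (x1 n).2) Filter.atTop Filter.atTop)
    (h2 : Filter.Tendsto (fun n => (x2 n).2) Filter.atTop Filter.atBot)
    -- (2) every vertical strip around an abscissa of X_ℕ meets X_ℕ in a finite set
    (h3 : ∀ β ∈ Prod.fst '' (Set.range x1 ∪ Set.range x2), ∃ δ > (0 : ℝ),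
      ((Set.range x1 ∪ Set.range x2) ∩
        Prod.fst ⁻¹' Set.Icc (β - δ) (β + δ)).Finite) :
    ∃ F : (ℝ × ℝ) ≃ₜ (ℝ × ℝ), ∀ n : ℕ, ∀ v ∈ V n,
      omegaLimitSet F v = {x1 n} ∧ omegaLimitSet F.symm v = {x2 n} := by
  set Φ : ℂ ≃ₜ ℝ × ℝ := Complex.equivRealProdCLM.toHomeomorph with hΦ
  obtain ⟨e, he⟩ := (Set.countable_iUnion hVcount).exists_eq_range
    ((hVdense 0).nonempty.mono (Set.subset_iUnion V 0))
  have hmem : ∀ i, ∃ n, e i ∈ V n := fun i =>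
    Set.mem_iUnion.1 (he ▸ Set.mem_range_self i)
  choose l hl using hmem
  have hlu : ∀ i n, e i ∈ V n → l i = n := by
    intro i n h
    by_contra hne
    exact Set.disjoint_left.1 (hVdisj _ _ hne) (hl i) h
  have hXcl : IsClosed (Set.range x1 ∪ Set.range x2) :=
    (isClosed_range_of_tendsto_snd (h1.mono_right atTop_le_cocompact)).union
      (isClosed_range_of_tendsto_snd (h2.mono_right atBot_le_cocompact))
  have hrange : Set.range (fun n => Φ.symm (x1 n)) ∪ Set.range (fun n => Φ.symm (x2 n)) =
      Φ ⁻¹' (Set.range x1 ∪ Set.range x2) := by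
    rw [← Φ.image_symm, Set.image_union, ← Set.range_comp, ← Set.range_comp]
    rfl
  obtain ⟨F, hF⟩ := Wada.exists_conv (x1 := fun n => Φ.symm (x1 n)) (x2 := fun n => Φ.symm (x2 n))
    (e := fun i => Φ.symm (e i)) (l := l)
    (fun i j hij => hlu i (l j) (Φ.symm.injective hij ▸ hl j))
    (by rw [hrange]; exact hXcl.preimage Φ.continuous)
    (fun i => by
      rw [hrange, Set.mem_preimage, Homeomorph.apply_symm_apply]
      exact hVsub _ (hl i))
  have hconj : ∀ (H : ℂ ≃ₜ ℂ) (v x : ℝ × ℝ),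
      Filter.Tendsto (fun n => H^[n] (Φ.symm v)) Filter.atTop (nhds (Φ.symm x)) →
      Filter.Tendsto (fun n => ((Φ.symm.trans H).trans Φ)^[n] v) Filter.atTop (nhds x) := by
    intro H v x h
    have hs : Function.Semiconj Φ H ((Φ.symm.trans H).trans Φ) := fun z => by simp
    have := (Φ.continuous.tendsto _).comp h
    rw [Homeomorph.apply_symm_apply] at this
    refine this.congr fun n => ?_
    rw [Function.comp_apply, (hs.iterate_right n).eq, Homeomorph.apply_symm_apply]
  refine ⟨(Φ.symm.trans F).trans Φ, fun n v hv => ?_⟩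
  obtain ⟨i, rfl⟩ : v ∈ Set.range e := he ▸ Set.mem_iUnion.2 ⟨n, hv⟩
  obtain rfl := hlu i n hv
  exact ⟨omegaLimitSet_eq_singleton (hconj F _ _ (hF i).1),
    omegaLimitSet_eq_singleton (hconj F.symm _ _ (hF i).2)⟩
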